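/- arXiv:1006.5883 — 2 statements merged into one kernel-verified Lean document; each statement's English description precedes it below -/
import Mathlib

section
/- Let F = ⋃_{j=1}^J φ_j(F) ⊂ ℝ^d be the self-similar attractor of an IFS Φ = {φ_j}_{j=1}^J (J ≥ 2) of similitudes with scaling ratios 0 < r_j < 1, and let D be the unique real root of ∑_{j=1}^J r_j^D = 1. Assume dim[F] = d (where [F] = C denotes the convex hull of F), that Φ satisfies the Tileset Condition (the open set condition with int C as feasible open set), the Nontriviality Condition (int C ⊄ ⋃_j φ_j(C)), and the Pearse–Winter Condition (∂C ⊂ F). Assume D > d−1, assume T_0 = C ∖ ⋃_j φ_j(C) has a single connected component G which is diphase Steiner-like with inradius g and coefficients κ_0(G),…,κ_d(G). If Φ is of non-lattice type (i.e. the additive subgroup ∑_{j=1}^J (log r_j)ℤ of ℝ is dense), then F is Minkowski measurable with Minkowski content M(F) = (∑_{m=0}^d (g^{D−m}/(D−m)) κ_m(G)) / (∑_{j=1}^J r_j^D log r_j^{−1}). -/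
open MeasureTheory Filter

/-- The inner `ε`-neighborhood of a set `G`:
`{x ∈ closure G | dist(x, Gᶜ) ≤ ε}`. -/
def innerNbhd {d : ℕ} (G : Set (EuclideanSpace ℝ (Fin d))) (ε : ℝ) :
    Set (EuclideanSpace ℝ (Fin d)) :=
  {x ∈ closure G | Metric.infDist x Gᶜ ≤ ε}

section Helpers

open Topology

lemma semigroup_net {ι : Type*} (a : ι → ℝ) (ha : ∀ j, 0 < a j) [Nonempty ι]
    (hd : Dense ((AddSubgroup.closure (Set.range a) : AddSubgroup ℝ) : Set ℝ))
    (η : ℝ) (hη : 0 < η) :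
    ∃ M : ℝ, 0 ≤ M ∧ ∀ x, M ≤ x → ∃ s ∈ AddSubmonoid.closure (Set.range a), s ≤ x ∧ x < s + η := by
  set S := AddSubmonoid.closure (Set.range a) with hS
  have hdiff : ∀ x ∈ AddSubgroup.closure (Set.range a), ∃ s ∈ S, ∃ t ∈ S, x = s - t := by
    intro x hx
    induction hx using AddSubgroup.closure_induction with
    | mem x hx => exact ⟨x, AddSubmonoid.subset_closure hx, 0, S.zero_mem, by simp⟩
    | zero => exact ⟨0, S.zero_mem, 0, S.zero_mem, by simp⟩
    | add x y _ _ hx hy =>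
      obtain ⟨s, hs, t, ht, rfl⟩ := hx
      obtain ⟨s', hs', t', ht', rfl⟩ := hy
      exact ⟨s + s', S.add_mem hs hs', t + t', S.add_mem ht ht', by ring⟩
    | neg x _ hx =>
      obtain ⟨s, hs, t, ht, rfl⟩ := hx
      exact ⟨t, ht, s, hs, by ring⟩
  have hnn : ∀ x ∈ S, 0 ≤ x := by
    intro x hx
    induction hx using AddSubmonoid.closure_induction with
    | mem x hx => obtain ⟨j, rfl⟩ := hx; exact (ha j).le
    | zero => exact le_rfl
    | add x y _ _ hx hy => exact add_nonneg hx hy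
  obtain ⟨u, hu, huG⟩ := hd.exists_mem_open (isOpen_Ioo (a := (0 : ℝ)) (b := η)) ⟨η / 2, by constructor <;> linarith⟩
  obtain ⟨s, hs, t, ht, hst⟩ := hdiff u hu
  obtain ⟨j⟩ := ‹Nonempty ι›
  have haj : a j ∈ S := AddSubmonoid.subset_closure ⟨j, rfl⟩
  set b := t + a j with hb
  have hbS : b ∈ S := S.add_mem ht haj
  have hbu : b + u ∈ S := by
    have : b + u = s + a j := by rw [hst]; ring
    rw [this]; exact S.add_mem hs haj
  have hbpos : 0 < b := by have := hnn t ht; have := ha j; linarith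
  obtain ⟨hu0, huη⟩ := huG
  obtain ⟨N, hN⟩ := exists_nat_ge (b / u)
  have hNu : b ≤ N * u := by rwa [div_le_iff₀ hu0] at hN
  refine ⟨N * b, by positivity, fun x hx => ?_⟩
  have hx0 : 0 ≤ x := le_trans (by positivity) hx
  set n := ⌊x / b⌋₊ with hn
  have hn1 : (n : ℝ) * b ≤ x := by
    rw [← le_div_iff₀ hbpos]; exact Nat.floor_le (by positivity)
  have hn2 : x < (n + 1) * b := by
    rw [← div_lt_iff₀ hbpos]; exact Nat.lt_floor_add_one _
  have hNn : N ≤ n := Nat.le_floor (by rw [le_div_iff₀ hbpos]; exact hx)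
  set y := x - n * b with hy
  have hy0 : 0 ≤ y := by linarith
  set k := ⌊y / u⌋₊ with hk
  have hk1 : (k : ℝ) * u ≤ y := by
    rw [← le_div_iff₀ hu0]; exact Nat.floor_le (by positivity)
  have hk2 : y < (k + 1) * u := by
    rw [← div_lt_iff₀ hu0]; exact Nat.lt_floor_add_one _
  have hkN : k ≤ N := by
    have : (k : ℝ) * u ≤ N * u := by nlinarith
    exact_mod_cast le_of_mul_le_mul_right this hu0
  obtain ⟨q, hq⟩ := Nat.exists_eq_add_of_le (hkN.trans hNn)
  have hqr : (n : ℝ) = k + q := by rw [hq]; push_cast; ring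
  refine ⟨k • (b + u) + q • b, S.add_mem (S.nsmul_mem hbu k) (S.nsmul_mem hbS q), ?_, ?_⟩
  · simp only [nsmul_eq_mul]; rw [hqr] at hy; nlinarith
  · simp only [nsmul_eq_mul]; rw [hqr] at hy; nlinarith

lemma semigroup_tendsto {ι : Type*} [Fintype ι] (p a : ι → ℝ) (hp : ∀ j, 0 < p j)
    (hp1 : ∑ j, p j = 1) (f : ℝ → ℝ) (L : ℝ)
    (hz : Tendsto (fun t => f t - ∑ j, p j * f (t - a j)) atTop (𝓝 0))
    (hL : ∀ δ > 0, ∀ᶠ t in atTop, f t < L + δ)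
    (l : Filter ℝ) (hl : l ≤ atTop) (hfl : Tendsto f l (𝓝 L)) :
    ∀ s ∈ AddSubmonoid.closure (Set.range a), Tendsto (fun t => f (t - s)) l (𝓝 L) := by
  classical
  have hsh : ∀ s : ℝ, Tendsto (fun t => t - s) l atTop := fun s =>
    (tendsto_atTop_add_const_right _ (-s) tendsto_id).mono_left hl
  have key : ∀ s, Tendsto (fun t => f (t - s)) l (𝓝 L) → ∀ j,
      Tendsto (fun t => f (t - (s + a j))) l (𝓝 L) := by
    intro s hs j
    rw [Metric.tendsto_nhds] at hs ⊢
    intro δ hδ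
    have hz' := (Metric.tendsto_nhds.1 (hz.comp (hsh s))) (p j * δ / 4) (by have := hp j; positivity)
    have hs' := hs (p j * δ / 4) (by have := hp j; positivity)
    have hLs : ∀ i, ∀ᶠ t in l, f (t - s - a i) < L + p j * δ / 4 := fun i => by
      have h1 := (hsh (s + a i)).eventually (hL (p j * δ / 4) (by have := hp j; positivity))
      filter_upwards [h1] with t ht
      rwa [sub_sub]
    have hpj : p j ≤ 1 := by
      rw [← hp1]; exact Finset.single_le_sum (fun i _ => (hp i).le) (Finset.mem_univ j)
    filter_upwards [hz', hs', eventually_all.2 hLs] with t h1 h2 h3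
    simp only [Function.comp, Real.dist_eq, sub_zero] at h1 h2 ⊢
    rw [← sub_sub]
    have hsplit := Finset.add_sum_erase Finset.univ (fun i => p i * f (t - s - a i)) (Finset.mem_univ j)
    have hsplit1 := Finset.add_sum_erase Finset.univ p (Finset.mem_univ j)
    have hle : ∑ i ∈ Finset.univ.erase j, p i * f (t - s - a i) ≤
        ∑ i ∈ Finset.univ.erase j, p i * (L + p j * δ / 4) :=
      Finset.sum_le_sum fun i _ => mul_le_mul_of_nonneg_left (h3 i).le (hp i).le
    rw [← Finset.sum_mul] at hle
    rw [abs_lt] at h1 h2 ⊢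
    have hpj0 := hp j
    have e1 : ∑ i ∈ Finset.univ.erase j, p i = 1 - p j := by linarith
    rw [e1] at hle
    have h3j := h3 j
    constructor
    · have : p j * (L - δ) < p j * f (t - s - a j) := by nlinarith
      have := lt_of_mul_lt_mul_left this hpj0.le
      linarith
    · nlinarith
  intro s hs
  induction hs using AddSubmonoid.closure_induction_right with
  | zero => simpa using hfl
  | add_right x _ y hy ih =>
    obtain ⟨j, rfl⟩ := hy
    exact key _ ih j

lemma finite_net {ι : Type*} (a : ι → ℝ) (ha : ∀ j, 0 < a j) [Nonempty ι]
    (hd : Dense ((AddSubgroup.closure (Set.range a) : AddSubgroup ℝ) : Set ℝ))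
    (η : ℝ) (hη : 0 < η) (A : ℝ) :
    ∃ M : ℝ, ∃ T : Finset ℝ, (∀ s ∈ T, s ∈ AddSubmonoid.closure (Set.range a)) ∧
      ∀ y, M ≤ y → y ≤ M + A → ∃ s ∈ T, s ≤ y ∧ y < s + η := by
  classical
  obtain ⟨M, hM0, hM⟩ := semigroup_net a ha hd (η / 2) (by linarith)
  obtain ⟨N, hN⟩ := exists_nat_ge (A / (η / 2))
  have hA : A ≤ N * (η / 2) := by rwa [div_le_iff₀ (by linarith)] at hN
  have : ∀ k : ℕ, ∃ s ∈ AddSubmonoid.closure (Set.range a),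
      s ≤ M + k * (η / 2) ∧ M + k * (η / 2) < s + η / 2 := fun k =>
    hM _ (by have : (0:ℝ) ≤ k * (η / 2) := by positivity
             linarith)
  choose σ hσ1 hσ2 hσ3 using this
  refine ⟨M, (Finset.range (N + 1)).image σ, ?_, ?_⟩
  · intro s hs
    obtain ⟨k, _, rfl⟩ := Finset.mem_image.1 hs
    exact hσ1 k
  · intro y hy1 hy2
    set k := ⌊(y - M) / (η / 2)⌋₊ with hk
    have hη2 : 0 < η / 2 := by linarith
    have hk1 : (k : ℝ) * (η / 2) ≤ y - M := by
      rw [← le_div_iff₀ hη2]; exact Nat.floor_le (div_nonneg (by linarith) hη2.le)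
    have hk2 : y - M < (k + 1) * (η / 2) := by
      rw [← div_lt_iff₀ hη2]; exact Nat.lt_floor_add_one _
    have hkN : k ≤ N := by
      have : (k : ℝ) * (η / 2) ≤ N * (η / 2) := by linarith
      exact_mod_cast le_of_mul_le_mul_right this hη2
    refine ⟨σ k, Finset.mem_image.2 ⟨k, Finset.mem_range.2 (by omega), rfl⟩, ?_, ?_⟩
    · linarith [hσ2 k]
    · linarith [hσ3 k]

theorem renewal {ι : Type*} [Fintype ι] [Nonempty ι] (p a : ι → ℝ) (hp : ∀ j, 0 < p j)
    (ha : ∀ j, 0 < a j) (hp1 : ∑ j, p j = 1)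
    (hd : Dense ((AddSubgroup.closure (Set.range a) : AddSubgroup ℝ) : Set ℝ))
    (c K : ℝ) (hc : 0 < c) (w z : ℝ → ℝ) (hw0 : ∀ t, 0 ≤ w t)
    (hwm : Measurable w)
    (hwK : ∀ t, w t ≤ K * Real.exp (c * t))
    (hslow : ∀ t s, 0 ≤ s → w (t + s) ≤ Real.exp (c * s) * w t)
    (hzi : Integrable z) (hz0 : Tendsto z atTop (𝓝 0))
    (hren : ∀ t, w t = z t + ∑ j, p j * w (t - a j)) :
    Tendsto w atTop (𝓝 ((∫ t, z t) / ∑ j, p j * a j)) := by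
  classical
  set Z := ∫ t, z t with hZ
  set μ := ∑ j, p j * a j with hμ
  have hμ0 : 0 < μ := Finset.sum_pos (fun j _ => mul_pos (hp j) (ha j)) Finset.univ_nonempty
  set A := ∑ j, a j with hA
  have haA : ∀ j, a j ≤ A := fun j =>
    Finset.single_le_sum (fun i _ => (ha i).le) (Finset.mem_univ j)
  have hA0 : 0 ≤ A := Finset.sum_nonneg fun i _ => (ha i).le
  -- integrability
  have hwI : ∀ t, IntegrableOn w (Set.Iic t) := by
    intro t
    have h1 : IntegrableOn (fun t => K * Real.exp (c * t)) (Set.Iic t) :=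
      (integrableOn_exp_mul_Iic hc t).const_mul K
    refine Integrable.mono' h1 hwm.aestronglyMeasurable (Eventually.of_forall fun x => ?_)
    rw [Real.norm_of_nonneg (hw0 x)]; exact hwK x
  have hwII : ∀ s t, IntervalIntegrable w volume s t := by
    intro s t
    rw [intervalIntegrable_iff]
    exact (hwI (max s t)).mono_set (fun x hx => hx.2)
  set U : ℝ → ℝ := fun t => ∑ j, p j * ∫ x in (t - a j)..t, w x with hU
  have hUz : ∀ t, U t = ∫ x in Set.Iic t, z x := by
    intro t
    have hshift : ∀ j, ∫ x in Set.Iic t, w (x - a j) = ∫ x in Set.Iic (t - a j), w x := by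
      intro j
      have h := (measurePreserving_sub_right (volume : Measure ℝ) (a j)).setIntegral_preimage_emb
        (MeasurableEquiv.subRight (a j)).measurableEmbedding w (Set.Iic (t - a j))
      rw [← h]
      congr 2
      ext x; simp
    have hshiftI : ∀ j, IntegrableOn (fun x => w (x - a j)) (Set.Iic t) := by
      intro j
      have h := ((measurePreserving_sub_right (volume : Measure ℝ) (a j)).integrableOn_comp_preimage
        (MeasurableEquiv.subRight (a j)).measurableEmbedding (f := w) (s := Set.Iic (t - a j))).2 (hwI _)
      have he : (fun x => x - a j) ⁻¹' Set.Iic (t - a j) = Set.Iic t := by ext x; simp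
      rw [he] at h
      exact h
    have h1 : ∫ x in Set.Iic t, w x = (∫ x in Set.Iic t, z x) +
        ∑ j, p j * ∫ x in Set.Iic (t - a j), w x := by
      calc ∫ x in Set.Iic t, w x = ∫ x in Set.Iic t, (z x + ∑ j, p j * w (x - a j)) := by
            congr 1; ext x; exact hren x
        _ = (∫ x in Set.Iic t, z x) + ∫ x in Set.Iic t, ∑ j, p j * w (x - a j) := by
            apply integral_add hzi.integrableOn
            exact integrable_finsetSum _ fun j _ => (hshiftI j).const_mul _
        _ = _ := by
            rw [integral_finsetSum _ fun j _ => (hshiftI j).const_mul _]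
            congr 1
            refine Finset.sum_congr rfl fun j _ => ?_
            rw [integral_const_mul, hshift]
    have h2 : ∀ j, ∫ x in (t - a j)..t, w x = (∫ x in Set.Iic t, w x) -
        ∫ x in Set.Iic (t - a j), w x := fun j =>
      (intervalIntegral.integral_Iic_sub_Iic (hwI _) (hwI _)).symm
    simp only [hU, h2, mul_sub, Finset.sum_sub_distrib, ← Finset.sum_mul, hp1]
    linarith
  have hUlim : Tendsto U atTop (𝓝 Z) := by
    have := (aecover_Iic (μ := (volume : Measure ℝ)) tendsto_id).integral_tendsto_of_countably_generated hzi
    exact this.congr fun t => (hUz t).symm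
  have hUlow : ∀ t B, (∀ x, t - A ≤ x → x ≤ t → B ≤ w x) → B * μ ≤ U t := by
    intro t B hB
    rw [hμ, Finset.mul_sum]
    refine Finset.sum_le_sum fun j _ => ?_
    have h := intervalIntegral.integral_mono_on (a := t - a j) (b := t) (by linarith [ha j])
      (f := fun _ => B) (g := w) (by simp) (hwII _ _)
      (fun x hx => hB x (by linarith [haA j, hx.1]) hx.2)
    rw [intervalIntegral.integral_const] at h
    simp only [sub_sub_cancel, smul_eq_mul] at h
    nlinarith [hp j]
  have hUup : ∀ t B, (∀ x, t - A ≤ x → x ≤ t → w x ≤ B) → U t ≤ B * μ := by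
    intro t B hB
    rw [hμ, Finset.mul_sum]
    refine Finset.sum_le_sum fun j _ => ?_
    have h := intervalIntegral.integral_mono_on (a := t - a j) (b := t) (by linarith [ha j])
      (g := fun _ => B) (f := w) (hwII _ _) (by simp)
      (fun x hx => hB x (by linarith [haA j, hx.1]) hx.2)
    rw [intervalIntegral.integral_const] at h
    simp only [sub_sub_cancel, smul_eq_mul] at h
    nlinarith [hp j]
  -- slow variation
  have hslow' : ∀ x t η, x ≤ t → t ≤ x + η → Real.exp (-(c * η)) * w t ≤ w x := by
    intro x t η h1 h2
    have h := hslow x (t - x) (by linarith)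
    rw [add_sub_cancel] at h
    have h3 : Real.exp (c * (t - x)) ≤ Real.exp (c * η) := Real.exp_le_exp.2 (by nlinarith)
    rw [Real.exp_neg, inv_mul_le_iff₀ (Real.exp_pos _)]
    exact h.trans (mul_le_mul_of_nonneg_right h3 (hw0 x))
  -- boundedness
  have hbdd : ∀ᶠ t in atTop, w t ≤ Real.exp (c * A) * (Z + 1) / μ := by
    filter_upwards [hUlim.eventually (gt_mem_nhds (lt_add_one Z))] with t ht
    have h := hUlow t (Real.exp (-(c * A)) * w t) fun x h1 h2 => hslow' x t A h2 (by linarith)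
    rw [Real.exp_neg] at h
    rw [le_div_iff₀ hμ0, ← inv_mul_le_iff₀ (Real.exp_pos _), ← mul_assoc]
    linarith
  have hb1 : IsBoundedUnder (· ≤ ·) atTop w := ⟨_, eventually_map.2 hbdd⟩
  have hb2 : IsBoundedUnder (· ≥ ·) atTop w := ⟨0, eventually_map.2 (Eventually.of_forall hw0)⟩
  have hzlim : Tendsto (fun t => w t - ∑ j, p j * w (t - a j)) atTop (𝓝 0) := by
    refine hz0.congr fun t => ?_
    rw [hren t]; ring
  have hsh : ∀ s : ℝ, Tendsto (fun t : ℝ => t - s) atTop atTop := fun s =>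
    tendsto_atTop_add_const_right _ (-s) tendsto_id
  have hexp : Tendsto (fun η : ℝ => Real.exp (c * η)) (𝓝[>] 0) (𝓝 1) := by
    have : Continuous fun η : ℝ => Real.exp (c * η) := by fun_prop
    have h := this.tendsto 0
    simp only [mul_zero, Real.exp_zero] at h
    exact h.mono_left nhdsWithin_le_nhds
  refine tendsto_of_le_liminf_of_limsup_le ?_ ?_ hb1 hb2
  · -- liminf
    set L := liminf w atTop with hL
    have hcl := (isLeast_mapClusterPt_liminf hb1.isCoboundedUnder_ge hb2).1
    obtain ⟨l, hl, hwl⟩ := mapClusterPt_iff_ultrafilter.1 hcl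
    have hT := semigroup_tendsto p a hp hp1 (fun t => - w t) (-L)
      (by have := hzlim.neg
          simp only [neg_zero] at this
          refine this.congr fun t => ?_
          simp only [mul_neg, Finset.sum_neg_distrib]; ring)
      (fun δ hδ => by
        have : L - δ < liminf w atTop := by rw [← hL]; linarith
        filter_upwards [eventually_lt_of_lt_liminf this hb2] with t ht
        linarith) l hl hwl.neg
    have step : ∀ η > 0, Z ≤ Real.exp (c * η) * (L + η) * μ := by
      intro η hη
      obtain ⟨M, T, hTS, hTn⟩ := finite_net a ha hd η hη (A + η)
      have hev : ∀ᶠ t in (l : Filter ℝ), ∀ s ∈ T, w (t - s) < L + η := by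
        rw [Filter.eventually_all_finset]
        intro s hs
        filter_upwards [(hT s (hTS s hs)).eventually (lt_mem_nhds (show -L - η < -L by linarith))] with t ht
        linarith
      have hUl : Tendsto (fun t => U (t - M)) l (𝓝 Z) := (hUlim.comp (hsh M)).mono_left hl
      refine le_of_tendsto hUl ?_
      filter_upwards [hev] with t ht
      refine hUup _ _ fun x hx1 hx2 => ?_
      obtain ⟨s, hs, h1, h2⟩ := hTn (t - x + η) (by linarith) (by linarith)
      have h3 := hslow' (t - s) x η (by linarith) (by linarith)
      rw [Real.exp_neg, inv_mul_le_iff₀ (Real.exp_pos _)] at h3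
      exact h3.trans (mul_le_mul_of_nonneg_left (ht s hs).le (Real.exp_pos _).le)
    have hlim : Tendsto (fun η : ℝ => Real.exp (c * η) * (L + η) * μ) (𝓝[>] 0) (𝓝 (1 * (L + 0) * μ)) :=
      (hexp.mul (tendsto_const_nhds.add (tendsto_id.mono_left nhdsWithin_le_nhds))).mul_const μ
    have := ge_of_tendsto hlim (eventually_mem_nhdsWithin.mono fun η hη => step η hη)
    rw [div_le_iff₀ hμ0]; linarith
  · -- limsup
    set L := limsup w atTop with hL
    have hcl := (isGreatest_mapClusterPt_limsup hb2.isCoboundedUnder_le hb1).1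
    obtain ⟨l, hl, hwl⟩ := mapClusterPt_iff_ultrafilter.1 hcl
    have hT := semigroup_tendsto p a hp hp1 w L hzlim
      (fun δ hδ => by
        have : limsup w atTop < L + δ := by rw [← hL]; linarith
        exact eventually_lt_of_limsup_lt this hb1) l hl hwl
    have step : ∀ η > 0, (L - η) * μ ≤ Real.exp (c * η) * Z := by
      intro η hη
      obtain ⟨M, T, hTS, hTn⟩ := finite_net a ha hd η hη (A + η)
      have hev : ∀ᶠ t in (l : Filter ℝ), ∀ s ∈ T, L - η < w (t - s) := by
        rw [Filter.eventually_all_finset]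
        intro s hs
        exact (hT s (hTS s hs)).eventually (lt_mem_nhds (by linarith))
      have hUl : Tendsto (fun t => U (t - M)) l (𝓝 Z) := (hUlim.comp (hsh M)).mono_left hl
      have : Real.exp (-(c * η)) * (L - η) * μ ≤ Z := by
        refine ge_of_tendsto hUl ?_
        filter_upwards [hev] with t ht
        refine hUlow _ _ fun x hx1 hx2 => ?_
        obtain ⟨s, hs, h1, h2⟩ := hTn (t - x) (by linarith) (by linarith)
        have h3 := hslow' x (t - s) η (by linarith) (by linarith)
        exact (mul_le_mul_of_nonneg_left (ht s hs).le (Real.exp_pos _).le).trans h3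
      rwa [Real.exp_neg, mul_assoc, inv_mul_le_iff₀ (Real.exp_pos _)] at this
    have hlim1 : Tendsto (fun η : ℝ => (L - η) * μ) (𝓝[>] 0) (𝓝 ((L - 0) * μ)) :=
      (tendsto_const_nhds.sub (tendsto_id.mono_left nhdsWithin_le_nhds)).mul_const μ
    have hlim2 : Tendsto (fun η : ℝ => Real.exp (c * η) * Z) (𝓝[>] 0) (𝓝 (1 * Z)) := hexp.mul_const Z
    have := le_of_tendsto_of_tendsto hlim1 hlim2 (eventually_mem_nhdsWithin.mono fun η hη => step η hη)
    rw [le_div_iff₀ hμ0]; linarith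

theorem minkowski_analytic (d J : ℕ) [Nonempty (Fin J)] (r : Fin J → ℝ) (hr0 : ∀ j, 0 < r j)
    (hr1 : ∀ j, r j < 1) (D : ℝ) (hD : ∑ j, r j ^ D = 1) (hDd : (d : ℝ) - 1 < D)
    (hDd' : D < d) (g : ℝ) (hg : 0 < g) (κ : ℕ → ℝ) (W h : ℝ → ℝ) (K : ℝ)
    (hW0 : ∀ ε, 0 ≤ W ε) (hWmono : Monotone W) (hWK : ∀ ε, W ε ≤ K)
    (hren : ∀ ε, 0 < ε → W ε = h ε + ∑ j, r j ^ d * W (ε / r j))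
    (hh0 : ∀ ε, 0 ≤ h ε)
    (hSt₁ : ∀ ε : ℝ, 0 < ε → ε < g → h ε = ∑ m ∈ Finset.range d, κ m * ε ^ ((d : ℝ) - m))
    (hSt₂ : ∀ ε : ℝ, g ≤ ε → h ε = -κ d) (hκ : 0 < -κ d)
    (hnonlat : Dense ((AddSubgroup.closure (Set.range fun j => Real.log (r j)) :
        AddSubgroup ℝ) : Set ℝ)) :
    0 < (∑ m ∈ Finset.range (d + 1), g ^ (D - (m : ℝ)) / (D - (m : ℝ)) * κ m) /
        (∑ j, r j ^ D * Real.log (r j)⁻¹) ∧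
    Tendsto (fun ε : ℝ => W ε * ε ^ (D - (d : ℝ)))
      (nhdsWithin 0 (Set.Ioi 0))
      (nhds ((∑ m ∈ Finset.range (d + 1), g ^ (D - (m : ℝ)) / (D - (m : ℝ)) * κ m) /
        (∑ j, r j ^ D * Real.log (r j)⁻¹))) := by
  set a : Fin J → ℝ := fun j => Real.log (r j)⁻¹ with ha
  have ha0 : ∀ j, 0 < a j := fun j => Real.log_pos ((one_lt_inv₀ (hr0 j)).2 (hr1 j))
  have haexp : ∀ j, Real.exp (a j) = (r j)⁻¹ := fun j => Real.exp_log (inv_pos.2 (hr0 j))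
  have hdense : Dense ((AddSubgroup.closure (Set.range a) : AddSubgroup ℝ) : Set ℝ) := by
    refine hnonlat.mono ?_
    have : AddSubgroup.closure (Set.range fun j => Real.log (r j)) ≤ AddSubgroup.closure (Set.range a) := by
      rw [AddSubgroup.closure_le]
      rintro _ ⟨j, rfl⟩
      have h1 : a j ∈ AddSubgroup.closure (Set.range a) := AddSubgroup.subset_closure ⟨j, rfl⟩
      have h2 := AddSubgroup.neg_mem _ h1
      simpa [ha, Real.log_inv] using h2
    exact this
  set c : ℝ := d - D with hc
  have hc0 : 0 < c := by linarith
  set w : ℝ → ℝ := fun t => Real.exp (c * t) * W (Real.exp (-t)) with hw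
  set z : ℝ → ℝ := fun t => Real.exp (c * t) * h (Real.exp (-t)) with hz
  set t0 := -Real.log g with ht0
  have hz1 : ∀ t ∈ Set.Iic t0, z t = -κ d * Real.exp (c * t) := by
    intro t ht
    have : g ≤ Real.exp (-t) := by
      rw [← Real.log_le_iff_le_exp hg]
      have : t ≤ -Real.log g := ht
      linarith
    simp only [hz]; rw [hSt₂ _ this]; ring
  have hz2 : ∀ t ∈ Set.Ioi t0, z t = ∑ m ∈ Finset.range d, κ m * Real.exp (-(D - m) * t) := by
    intro t ht
    have : Real.exp (-t) < g := by
      rw [← Real.lt_log_iff_exp_lt hg]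
      have : -Real.log g < t := ht
      linarith
    simp only [hz]; rw [hSt₁ _ (Real.exp_pos _) this, Finset.mul_sum]
    refine Finset.sum_congr rfl fun m _ => ?_
    rw [← Real.exp_mul, mul_left_comm, ← Real.exp_add]
    congr 2; simp only [hc]; ring
  have hDm : ∀ m ∈ Finset.range d, 0 < D - (m : ℝ) := by
    intro m hm
    have : ((m + 1 : ℕ) : ℝ) ≤ d := by exact_mod_cast Finset.mem_range.1 hm
    push_cast at this
    linarith
  have hzI1 : IntegrableOn z (Set.Iic t0) := by
    refine IntegrableOn.congr_fun ?_ (fun t ht => (hz1 t ht).symm) measurableSet_Iic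
    exact (integrableOn_exp_mul_Iic hc0 t0).const_mul _
  have hzI2' : ∀ m ∈ Finset.range d, IntegrableOn (fun t => κ m * Real.exp (-(D - m) * t)) (Set.Ioi t0) := by
    intro m hm
    exact (integrableOn_exp_mul_Ioi (by linarith [hDm m hm]) t0).const_mul _
  have hzI2 : IntegrableOn z (Set.Ioi t0) := by
    refine IntegrableOn.congr_fun ?_ (fun t ht => (hz2 t ht).symm) measurableSet_Ioi
    exact integrable_finsetSum _ hzI2'
  have hzI : Integrable z := by
    rw [← integrableOn_univ, ← Set.Iic_union_Ioi (a := t0)]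
    exact hzI1.union hzI2
  have hpow : ∀ x : ℝ, g ^ x = Real.exp (-x * t0) := by
    intro x
    rw [Real.rpow_def_of_pos hg, ht0]; congr 1; ring
  have hint1 : ∫ t in Set.Iic t0, z t = g ^ (D - (d : ℝ)) / (D - (d : ℝ)) * κ d := by
    rw [setIntegral_congr_fun measurableSet_Iic hz1, integral_const_mul, integral_exp_mul_Iic hc0, hpow]
    have e : -(D - (d:ℝ)) = c := by simp only [hc]; ring
    have e' : D - (d:ℝ) = -c := by linarith
    rw [e, e']; field_simp
  have hint2 : ∫ t in Set.Ioi t0, z t =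
      ∑ m ∈ Finset.range d, g ^ (D - (m : ℝ)) / (D - (m : ℝ)) * κ m := by
    rw [setIntegral_congr_fun measurableSet_Ioi hz2, integral_finsetSum _ hzI2']
    refine Finset.sum_congr rfl fun m hm => ?_
    have := hDm m hm
    rw [integral_const_mul, integral_exp_mul_Ioi (by linarith), hpow]
    field_simp
  have hint : ∫ t, z t = ∑ m ∈ Finset.range (d + 1), g ^ (D - (m : ℝ)) / (D - (m : ℝ)) * κ m := by
    rw [← setIntegral_univ, ← Set.Iic_union_Ioi (a := t0),
      setIntegral_union (Set.Iic_disjoint_Ioi le_rfl) measurableSet_Ioi hzI1 hzI2, hint1, hint2,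
      Finset.sum_range_succ, add_comm]
  have hznn : ∀ t, 0 ≤ z t := fun t => mul_nonneg (Real.exp_pos _).le (hh0 _)
  have hpos : 0 < ∑ m ∈ Finset.range (d + 1), g ^ (D - (m : ℝ)) / (D - (m : ℝ)) * κ m := by
    rw [Finset.sum_range_succ, ← hint2]
    have h1 : 0 ≤ ∫ t in Set.Ioi t0, z t := integral_nonneg hznn
    have h2 : 0 < g ^ (D - (d : ℝ)) / (D - (d : ℝ)) * κ d :=
      mul_pos_of_neg_of_neg (div_neg_of_pos_of_neg (Real.rpow_pos_of_pos hg _) (by linarith)) (by linarith)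
    linarith
  have hp0 : ∀ j, 0 < r j ^ D := fun j => Real.rpow_pos_of_pos (hr0 j) _
  have hμ0 : 0 < ∑ j, r j ^ D * a j :=
    Finset.sum_pos (fun j _ => mul_pos (hp0 j) (ha0 j)) Finset.univ_nonempty
  refine ⟨div_pos hpos hμ0, ?_⟩
  have hz0 : Tendsto z atTop (𝓝 0) := by
    have : Tendsto (fun t => ∑ m ∈ Finset.range d, κ m * Real.exp (-(D - m) * t)) atTop
        (𝓝 (∑ m ∈ Finset.range d, κ m * 0)) := by
      refine tendsto_finsetSum _ fun m hm => Tendsto.const_mul _ ?_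
      refine Real.tendsto_exp_atBot.comp ?_
      exact tendsto_id.const_mul_atTop_of_neg (by linarith [hDm m hm])
    simp only [mul_zero, Finset.sum_const_zero] at this
    refine this.congr' ?_
    filter_upwards [eventually_gt_atTop t0] with t ht
    exact (hz2 t ht).symm
  have hmain := renewal (fun j => r j ^ D) a hp0 ha0 hD hdense c K hc0 w z
    (fun t => mul_nonneg (Real.exp_pos _).le (hW0 _))
    ((by fun_prop : Measurable fun t : ℝ => Real.exp (c * t)).mul
      (hWmono.measurable.comp (by fun_prop)))
    (fun t => by
      simp only [hw]; rw [mul_comm K]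
      exact mul_le_mul_of_nonneg_left (hWK _) (Real.exp_pos _).le)
    (fun t s hs => by
      simp only [hw]
      rw [← mul_assoc, ← Real.exp_add, ← mul_add, add_comm s t]
      exact mul_le_mul_of_nonneg_left (hWmono (Real.exp_le_exp.2 (by linarith))) (Real.exp_pos _).le)
    hzI hz0
    (fun t => by
      simp only [hw, hz]
      rw [hren _ (Real.exp_pos _), mul_add, Finset.mul_sum]
      congr 1
      refine Finset.sum_congr rfl fun j _ => ?_
      have e1 : Real.exp (-(t - a j)) = Real.exp (-t) / r j := by
        rw [show -(t - a j) = -t + a j by ring, Real.exp_add, haexp]; rfl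
      have e2 : Real.exp (c * (t - a j)) = Real.exp (c * t) * r j ^ c := by
        rw [show c * (t - a j) = c * t + (- a j) * c by ring, Real.exp_add, Real.exp_mul (-a j), Real.exp_neg,
          haexp, inv_inv]
      have e3 : r j ^ D * r j ^ c = r j ^ d := by
        rw [← Real.rpow_add (hr0 j), ← Real.rpow_natCast]; congr 1; simp [hc]
      rw [e1, e2, ← e3]; ring)
  rw [hint] at hmain
  have hcomp := hmain.comp (tendsto_neg_atBot_atTop.comp Real.tendsto_log_nhdsGT_zero)
  refine hcomp.congr' ?_
  filter_upwards [self_mem_nhdsWithin] with ε hε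
  have hε' : 0 < ε := hε
  simp only [hw, Function.comp, neg_neg, Real.exp_log hε']
  rw [Real.rpow_def_of_pos hε', mul_comm]
  congr 2; simp only [hc]; ring

open scoped Pointwise in
lemma similitude_homeo {d : ℕ} (φ : EuclideanSpace ℝ (Fin d) → EuclideanSpace ℝ (Fin d)) (r : ℝ)
    (hr : 0 < r) (hsim : ∀ x y, dist (φ x) (φ y) = r * dist x y) :
    ∃ e : EuclideanSpace ℝ (Fin d) ≃ₜ EuclideanSpace ℝ (Fin d), (e : _ → _) = φ ∧
      ∀ s, volume (φ '' s) = ENNReal.ofReal (r ^ d) * volume s := by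
  have hiso : Isometry (fun x => r⁻¹ • φ x) := by
    refine Isometry.of_dist_eq fun x y => ?_
    rw [dist_smul₀, hsim, Real.norm_of_nonneg (inv_nonneg.2 hr.le), inv_mul_cancel_left₀ hr.ne']
  set e0 := hiso.affineIsometryOfStrictConvexSpace.toAffineIsometryEquiv rfl with he0
  have he : ∀ x, e0 x = r⁻¹ • φ x := fun x => rfl
  have hφ : ∀ x, φ x = r • e0 x := fun x => by rw [he, smul_inv_smul₀ hr.ne']
  refine ⟨e0.toHomeomorph.trans (Homeomorph.smulOfNeZero r hr.ne'), ?_, ?_⟩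
  · ext1 x
    rw [hφ]; rfl
  · intro s
    have h1 : φ '' s = r • (e0 '' s) := by
      rw [← Set.image_smul, Set.image_image]
      exact Set.image_congr fun x _ => hφ x
    have h2 : e0 '' s = (fun y => y + e0 0) '' (e0.linearIsometryEquiv '' s) := by
      rw [Set.image_image]
      refine Set.image_congr fun x _ => ?_
      have := e0.map_vadd 0 x
      simpa using this
    have h3 : volume (e0 '' s) = volume s := by
      rw [h2, Set.image_add_right, measure_preimage_add_right, 
        LinearIsometryEquiv.image_eq_preimage_symm]
      exact e0.linearIsometryEquiv.symm.measurePreserving.measure_preimage_emb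
        e0.linearIsometryEquiv.symm.toHomeomorph.measurableEmbedding s
    rw [h1, Measure.addHaar_smul, h3, finrank_euclideanSpace, Fintype.card_fin,
      abs_of_nonneg (by positivity)]

lemma exists_frontier_point {d : ℕ} (A : Set (EuclideanSpace ℝ (Fin d)))
    (x y : EuclideanSpace ℝ (Fin d)) (hx : x ∈ A) (hy : y ∉ interior A) :
    ∃ q ∈ frontier A, dist x q ≤ dist x y := by
  by_contra! hcon
  have hseg : ∀ q ∈ segment ℝ x y, q ∉ frontier A := by
    intro q hq hqf
    have h1 := hcon q hqf
    have h2 := dist_add_dist_of_mem_segment hq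
    have := dist_nonneg (x := q) (y := y)
    linarith
  have hcov : segment ℝ x y ⊆ interior A ∪ (closure A)ᶜ := by
    intro q hq
    by_cases h : q ∈ interior A
    · exact Or.inl h
    · exact Or.inr fun hc => hseg q hq ⟨hc, h⟩
  have hpre : IsPreconnected (segment ℝ x y) := (convex_segment x y).isPreconnected
  have hxs := left_mem_segment ℝ x y
  have hxi : x ∈ interior A := by
    rcases hcov hxs with h | h
    · exact h
    · exact absurd (subset_closure hx) h
  have := hpre.subset_left_of_subset_union isOpen_interior isClosed_closure.isOpen_compl
    (Set.disjoint_left.2 fun q h1 h2 => h2 (interior_subset_closure h1)) hcov ⟨x, hxs, hxi⟩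
  exact hy (this (right_mem_segment ℝ x y))

lemma volume_cthickening_convex {d : ℕ} (C : Set (EuclideanSpace ℝ (Fin d))) (hC : IsCompact C)
    (hconv : Convex ℝ C) (hdim : (interior C).Nonempty) :
    ∃ ρ > 0, ∀ ε > 0, volume (Metric.cthickening ε C) ≤ ENNReal.ofReal ((1 + ε / ρ) ^ d) * volume C := by
  obtain ⟨x0, hx0⟩ := hdim
  obtain ⟨ρ, hρ, hball⟩ := Metric.nhds_basis_closedBall.mem_iff.1 (mem_interior_iff_mem_nhds.1 hx0)
  refine ⟨ρ, hρ, fun ε hε => ?_⟩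
  have hk : 0 < 1 + ε / ρ := by positivity
  have hsub : Metric.cthickening ε C ⊆ AffineMap.homothety x0 (1 + ε / ρ) '' C := by
    intro x hx
    rw [hC.cthickening_eq_biUnion_closedBall hε.le] at hx
    obtain ⟨c, hc, hxc⟩ := Set.mem_iUnion₂.1 hx
    set v := x0 + (ρ / ε) • (x - c) with hv
    have hvC : v ∈ C := by
      apply hball
      rw [Metric.mem_closedBall, dist_eq_norm] at hxc ⊢
      rw [hv, add_sub_cancel_left, norm_smul, Real.norm_of_nonneg (by positivity), div_mul_eq_mul_div,
        div_le_iff₀ hε]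
      exact mul_le_mul_of_nonneg_left hxc hρ.le
    refine ⟨(1 / (1 + ε / ρ)) • c + ((ε / ρ) / (1 + ε / ρ)) • v,
      hconv hc hvC (by positivity) (by positivity) (by field_simp), ?_⟩
    rw [AffineMap.homothety_apply, vsub_eq_sub, vadd_eq_add, smul_sub, smul_add, smul_smul, smul_smul,
      mul_one_div_cancel hk.ne', mul_div_cancel₀ _ hk.ne', hv, smul_add, smul_smul,
      div_mul_div_cancel₀ hρ.ne', div_self hε.ne', add_smul]
    module
  calc volume (Metric.cthickening ε C) ≤ _ := measure_mono hsub
    _ = _ := by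
      rw [Measure.addHaar_image_homothety, finrank_euclideanSpace, Fintype.card_fin,
        abs_of_nonneg (by positivity)]

end Helpers

/-- A non-lattice self-similar fractal `F ⊆ ℝᵈ` (satisfying the
tileset, nontriviality and Pearse–Winter conditions, with `D > d - 1` and a single
diphase Steiner-like generator `G`) is Minkowski measurable, with Minkowski content
`(∑_{m=0}^d (g^{D-m}/(D-m)) κₘ(G)) / (∑_{j=1}^J rⱼ^D log rⱼ⁻¹)`. -/
theorem stmt_0
    (d J : ℕ) (hd : 1 ≤ d) (hJ : 2 ≤ J)
    -- the IFS: similitudes with ratios 0 < rⱼ < 1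
    (φ : Fin J → EuclideanSpace ℝ (Fin d) → EuclideanSpace ℝ (Fin d))
    (r : Fin J → ℝ) (hr0 : ∀ j, 0 < r j) (hr1 : ∀ j, r j < 1)
    (hsim : ∀ j x y, dist (φ j x) (φ j y) = r j * dist x y)
    -- the attractor F
    (F : Set (EuclideanSpace ℝ (Fin d)))
    (hFcpt : IsCompact F) (hFne : F.Nonempty)
    (hFinv : F = ⋃ j, φ j '' F)
    -- the Minkowski dimension D (Moran equation)
    (D : ℝ) (hD : ∑ j, r j ^ D = 1)
    -- the convex hull C = [F], with dim C = d
    (C : Set (EuclideanSpace ℝ (Fin d))) (hC : C = convexHull ℝ F)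
    (hdim : (interior C).Nonempty)
    -- Tileset Condition: OSC with int C as feasible open set
    (hTSC₁ : ∀ j, φ j '' interior C ⊆ interior C)
    (hTSC₂ : ∀ j k, j ≠ k → Disjoint (φ j '' interior C) (φ k '' interior C))
    -- Nontriviality Condition
    (hNTC : ¬ interior C ⊆ ⋃ j, φ j '' C)
    -- Pearse–Winter Condition
    (hPWC : frontier C ⊆ F)
    -- D > d - 1
    (hDd : (d : ℝ) - 1 < D)
    -- T₀ = C \ Φ(C) has a single connected component G, a bounded open set
    (G : Set (EuclideanSpace ℝ (Fin d)))
    (hG : G = C \ ⋃ j, φ j '' C)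
    (hGopen : IsOpen G) (hGbdd : Bornology.IsBounded G) (hGconn : IsConnected G)
    -- G is diphase Steiner-like with inradius g and coefficients κ₀,…,κ_d
    (g : ℝ) (hg : 0 < g)
    (hginr : IsLUB {ρ : ℝ | ∃ x, Metric.ball x ρ ⊆ G} g)
    (κ : ℕ → ℝ)
    (hSt₁ : ∀ ε : ℝ, 0 < ε → ε < g →
      (volume (innerNbhd G ε)).toReal = ∑ m ∈ Finset.range d, κ m * ε ^ ((d : ℝ) - m))
    (hSt₂ : ∀ ε : ℝ, g ≤ ε → (volume (innerNbhd G ε)).toReal = -κ d)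
    (hGvol : (volume G).toReal = -κ d)
    -- non-lattice type: the subgroup ∑ⱼ (log rⱼ)ℤ is dense in ℝ
    (hnonlat : Dense ((AddSubgroup.closure (Set.range fun j => Real.log (r j)) :
        AddSubgroup ℝ) : Set ℝ)) :
    -- F is Minkowski measurable with the stated Minkowski content
    0 < (∑ m ∈ Finset.range (d + 1), g ^ (D - (m : ℝ)) / (D - (m : ℝ)) * κ m) /
        (∑ j, r j ^ D * Real.log (r j)⁻¹) ∧
    Tendsto (fun ε : ℝ => (volume (Metric.cthickening ε F)).toReal * ε ^ (D - (d : ℝ)))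
      (nhdsWithin 0 (Set.Ioi 0))
      (nhds ((∑ m ∈ Finset.range (d + 1), g ^ (D - (m : ℝ)) / (D - (m : ℝ)) * κ m) /
        (∑ j, r j ^ D * Real.log (r j)⁻¹))) := by
  classical
  haveI : Nonempty (Fin J) := ⟨⟨0, by omega⟩⟩
  have hCconv : Convex ℝ C := hC ▸ convex_convexHull ℝ F
  have hFC : F ⊆ C := hC ▸ subset_convexHull ℝ F
  have hCcl : IsClosed C := by
    rw [← closure_subset_iff_isClosed, closure_eq_self_union_frontier]
    exact Set.union_subset le_rfl (hPWC.trans hFC)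
  have hCbdd : Bornology.IsBounded C := by
    rw [hC]; exact isBounded_convexHull.2 hFcpt.isBounded
  have hCcpt : IsCompact C := Metric.isCompact_of_isClosed_isBounded hCcl hCbdd
  have hCfin : volume C ≠ ⊤ := hCcpt.measure_ne_top
  have hCnull : volume (frontier C) = 0 := hCconv.addHaar_frontier volume
  have hCreg : closure (interior C) = C := by
    rw [hCconv.closure_interior_eq_closure_of_nonempty_interior hdim, hCcl.closure_eq]
  choose e he hvol using fun j => similitude_homeo (φ j) (r j) (hr0 j) (hsim j)
  have hφint : ∀ j, interior (φ j '' C) = φ j '' interior C := fun j => by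
    rw [← he j, (e j).image_interior]
  have hφcl : ∀ j, IsClosed (φ j '' C) := fun j => by
    rw [← he j, (e j).isClosed_image]; exact hCcl
  have hφfr : ∀ j, frontier (φ j '' C) = φ j '' frontier C := fun j => by
    rw [← he j, (e j).image_frontier]
  have hφinj : ∀ j, Function.Injective (φ j) := fun j => by rw [← he j]; exact (e j).injective
  have hφC : ∀ j, φ j '' C ⊆ C := by
    intro j
    have h1 : φ j '' C = closure (φ j '' interior C) := by
      rw [← he j, ← (e j).image_closure, hCreg]
    rw [h1]
    exact (closure_mono ((hTSC₁ j).trans interior_subset)).trans hCcl.closure_subset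
  have hφF : ∀ j, φ j '' F ⊆ F := fun j => by
    conv_rhs => rw [hFinv]
    exact Set.subset_iUnion (fun j => φ j '' F) j
  have hdisj : ∀ j k, j ≠ k → Disjoint (interior (φ j '' C)) (φ k '' C) := by
    intro j k hjk
    rw [hφint j]
    have h1 : φ k '' C = closure (φ k '' interior C) := by
      rw [← he k, ← (e k).image_closure, hCreg]
    rw [h1]
    refine (hTSC₂ j k hjk).closure_right ?_
    rw [← hφint j]; exact isOpen_interior
  have hφnull : ∀ j, volume (frontier (φ j '' C)) = 0 := fun j => by
    rw [hφfr, hvol, hCnull, mul_zero]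
  -- scaling of the distance function
  have hscale : ∀ j, ∀ x ∈ C, Metric.infDist (φ j x) F = r j * Metric.infDist x F := by
    intro j x hx
    apply le_antisymm
    · obtain ⟨y, hy, hxy⟩ := hFcpt.exists_infDist_eq_dist hFne x
      rw [hxy, ← hsim]
      exact Metric.infDist_le_dist_of_mem (hφF j ⟨y, hy, rfl⟩)
    · obtain ⟨y, hy, hxy⟩ := hFcpt.exists_infDist_eq_dist hFne (φ j x)
      rw [hxy]
      have hy2 := hy
      rw [hFinv] at hy2
      obtain ⟨k, y', hy', rfl⟩ := Set.mem_iUnion.1 hy2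
      by_cases hjk : j = k
      · subst hjk
        rw [hsim]
        exact mul_le_mul_of_nonneg_left (Metric.infDist_le_dist_of_mem hy') (hr0 j).le
      · have hni : φ k y' ∉ interior (φ j '' C) := fun hmem =>
          Set.disjoint_left.1 (hdisj j k hjk) hmem ⟨y', hFC hy', rfl⟩
        obtain ⟨q, hq, hqd⟩ := exists_frontier_point (φ j '' C) (φ j x) (φ k y') ⟨x, hx, rfl⟩ hni
        rw [hφfr] at hq
        obtain ⟨q', hq', rfl⟩ := hq
        refine le_trans ?_ hqd
        rw [hsim]
        exact mul_le_mul_of_nonneg_left (Metric.infDist_le_dist_of_mem (hPWC hq')) (hr0 j).le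
  -- the boundary of `G`
  have hKcl : IsClosed (⋃ j, φ j '' C) := isClosed_iUnion_of_finite hφcl
  have hGfr : frontier G ⊆ frontier C ∪ ⋃ j, frontier (φ j '' C) := by
    intro q hq
    by_cases hqC : q ∈ interior C
    · right
      have hqG : q ∉ G := by
        have := hq.2; rwa [hGopen.interior_eq] at this
      have hqK : q ∈ ⋃ j, φ j '' C := by
        by_contra hcon
        exact hqG (hG ▸ ⟨interior_subset hqC, hcon⟩)
      obtain ⟨j, hj⟩ := Set.mem_iUnion.1 hqK
      refine Set.mem_iUnion.2 ⟨j, subset_closure hj, fun hint => ?_⟩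
      have hcl := hq.1
      rw [mem_closure_iff] at hcl
      obtain ⟨p, hp1, hp2⟩ := hcl _ isOpen_interior hint
      rw [hG] at hp2
      exact hp2.2 (Set.mem_iUnion.2 ⟨j, interior_subset hp1⟩)
    · left
      refine ⟨?_, hqC⟩
      have hGC : G ⊆ C := by rw [hG]; exact Set.diff_subset
      exact closure_mono hGC hq.1
  have hGfrF : frontier G ⊆ F := by
    refine hGfr.trans (Set.union_subset hPWC (Set.iUnion_subset fun j => ?_))
    rw [hφfr]
    exact (Set.image_mono hPWC).trans (hφF j)
  have hGnull : volume (frontier G) = 0 := by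
    refine measure_mono_null hGfr ?_
    rw [measure_union_null_iff, measure_iUnion_null_iff]
    exact ⟨hCnull, hφnull⟩
  have hFG : F ⊆ Gᶜ := by
    intro y hy hyG
    rw [hG] at hyG
    rw [hFinv] at hy
    obtain ⟨k, y', hy', rfl⟩ := Set.mem_iUnion.1 hy
    exact hyG.2 (Set.mem_iUnion.2 ⟨k, y', hFC hy', rfl⟩)
  have hGdist : ∀ x ∈ G, Metric.infDist x Gᶜ = Metric.infDist x F := by
    intro x hx
    apply le_antisymm
    · exact Metric.infDist_le_infDist_of_subset hFG hFne
    · obtain ⟨y, hy, hxy⟩ := hGopen.isClosed_compl.exists_infDist_eq_dist (hFne.mono hFG) x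
      rw [hxy]
      obtain ⟨q, hq, hqd⟩ := exists_frontier_point G x y hx (by rw [hGopen.interior_eq]; exact hy)
      exact (Metric.infDist_le_dist_of_mem (hGfrF hq)).trans hqd
  -- the neighborhoods
  set N : ℝ → Set (EuclideanSpace ℝ (Fin d)) := fun ε => {x | Metric.infDist x F ≤ ε} with hN
  have hNcl : ∀ ε, IsClosed (N ε) := fun ε =>
    isClosed_le (Metric.continuous_infDist_pt F) continuous_const
  have hNm : ∀ ε, MeasurableSet (N ε) := fun ε => (hNcl ε).measurableSet
  have hinner : ∀ ε, volume (innerNbhd G ε) = volume (G ∩ N ε) := by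
    intro ε
    apply le_antisymm
    · calc volume (innerNbhd G ε) ≤ volume ((G ∩ N ε) ∪ frontier G) := by
            refine measure_mono fun x hx => ?_
            by_cases hxG : x ∈ G
            · refine Or.inl ⟨hxG, ?_⟩
              have := hx.2
              rwa [hGdist x hxG] at this
            · exact Or.inr ⟨hx.1, by rwa [hGopen.interior_eq]⟩
        _ ≤ volume (G ∩ N ε) + volume (frontier G) := measure_union_le _ _
        _ = _ := by rw [hGnull, add_zero]
    · refine measure_mono fun x hx => ⟨subset_closure hx.1, ?_⟩
      rw [hGdist x hx.1]; exact hx.2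
  set W : ℝ → ℝ := fun ε => (volume (C ∩ N ε)).toReal with hW
  have hWfin : ∀ ε, volume (C ∩ N ε) ≠ ⊤ := fun ε =>
    measure_ne_top_of_subset Set.inter_subset_left hCfin
  have himg : ∀ j ε, φ j '' C ∩ N ε = φ j '' (C ∩ N (ε / r j)) := by
    intro j ε
    ext x
    constructor
    · rintro ⟨⟨y, hy, rfl⟩, hx⟩
      refine ⟨y, ⟨hy, ?_⟩, rfl⟩
      have hx' : Metric.infDist (φ j y) F ≤ ε := hx
      rw [hscale j y hy] at hx'
      show Metric.infDist y F ≤ ε / r j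
      rw [le_div_iff₀ (hr0 j)]; linarith
    · rintro ⟨y, ⟨hy, hyN⟩, rfl⟩
      refine ⟨⟨y, hy, rfl⟩, ?_⟩
      have hx' : Metric.infDist y F ≤ ε / r j := hyN
      show Metric.infDist (φ j y) F ≤ ε
      rw [hscale j y hy]
      rw [le_div_iff₀ (hr0 j)] at hx'; linarith
  have hrenE : ∀ ε, volume (C ∩ N ε) = volume (G ∩ N ε) +
      ∑ j, ENNReal.ofReal (r j ^ d) * volume (C ∩ N (ε / r j)) := by
    intro ε
    have h1 : C ∩ N ε = (G ∩ N ε) ∪ ⋃ j, (φ j '' C ∩ N ε) := by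
      rw [← Set.iUnion_inter, ← Set.union_inter_distrib_right, hG, Set.diff_union_of_subset
        (Set.iUnion_subset hφC)]
    have h2 : Disjoint (G ∩ N ε) (⋃ j, (φ j '' C ∩ N ε)) := by
      rw [← Set.iUnion_inter, hG]
      exact Set.disjoint_sdiff_left.mono Set.inter_subset_left Set.inter_subset_left
    rw [h1, measure_union h2 (MeasurableSet.iUnion fun j => (hφcl j).measurableSet.inter (hNm ε)),
      measure_iUnion₀ ?_ fun j => ((hφcl j).measurableSet.inter (hNm ε)).nullMeasurableSet,
      tsum_fintype]
    · congr 1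
      refine Finset.sum_congr rfl fun j _ => ?_
      rw [himg, hvol]
    · intro j k hjk
      refine measure_mono_null (t := frontier (φ j '' C)) ?_ (hφnull j)
      rintro x ⟨⟨hxj, _⟩, ⟨hxk, _⟩⟩
      exact ⟨subset_closure hxj, fun hint => Set.disjoint_left.1 (hdisj j k hjk) hint hxk⟩
  have hren : ∀ ε, 0 < ε → W ε = (volume (innerNbhd G ε)).toReal + ∑ j, r j ^ d * W (ε / r j) := by
    intro ε _
    have hGfin : volume (G ∩ N ε) ≠ ⊤ :=
      measure_ne_top_of_subset Set.inter_subset_left hGbdd.measure_lt_top.ne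
    simp only [hW]
    rw [hrenE ε, hinner, ENNReal.toReal_add hGfin
      (ENNReal.sum_ne_top.2 fun j _ => ENNReal.mul_ne_top ENNReal.ofReal_ne_top (hWfin _)),
      ENNReal.toReal_sum fun j _ => ENNReal.mul_ne_top ENNReal.ofReal_ne_top (hWfin _)]
    congr 1
    refine Finset.sum_congr rfl fun j _ => ?_
    rw [ENNReal.toReal_mul, ENNReal.toReal_ofReal (pow_nonneg (hr0 j).le _)]
  have hWmono : Monotone W := fun ε ε' h =>
    ENNReal.toReal_mono (hWfin _) (measure_mono (Set.inter_subset_inter_right _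
      fun x (hx : Metric.infDist x F ≤ ε) => le_trans hx h))
  have hWK : ∀ ε, W ε ≤ (volume C).toReal := fun ε =>
    ENNReal.toReal_mono hCfin (measure_mono Set.inter_subset_left)
  have hκ : 0 < -κ d := by
    rw [← hGvol]
    exact ENNReal.toReal_pos (hGopen.measure_pos volume hGconn.nonempty).ne' hGbdd.measure_lt_top.ne
  have hDd' : D < d := by
    by_contra! hcon
    have hle : (1 : ℝ) ≤ ∑ j, r j ^ d := by
      rw [← hD]
      refine Finset.sum_le_sum fun j _ => ?_
      rw [← Real.rpow_natCast]
      exact Real.rpow_le_rpow_of_exponent_ge (hr0 j) (hr1 j).le hcon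
    have hbig : ∀ ε, Metric.diam C ≤ ε → W ε = (volume C).toReal := by
      intro ε hε
      simp only [hW]
      rw [Set.inter_eq_left.2]
      intro x hx
      obtain ⟨y, hy⟩ := hFne
      exact (Metric.infDist_le_dist_of_mem hy).trans
        ((Metric.dist_le_diam_of_mem hCbdd hx (hFC hy)).trans hε)
    set ε := max g (Metric.diam C) with hε
    have hε0 : 0 < ε := lt_of_lt_of_le hg (le_max_left _ _)
    have h1 := hren ε hε0
    have h2 : ∀ j, W (ε / r j) = (volume C).toReal := fun j => hbig _ (by
      rw [le_div_iff₀ (hr0 j)]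
      have h3 : Metric.diam C ≤ ε := le_max_right _ _
      have h4 : 0 ≤ Metric.diam C := Metric.diam_nonneg
      nlinarith [hr1 j, hr0 j])
    rw [hbig ε (le_max_right _ _), hSt₂ ε (le_max_left _ _)] at h1
    simp only [h2] at h1
    rw [← Finset.sum_mul] at h1
    have h5 : 0 ≤ (volume C).toReal := ENNReal.toReal_nonneg
    nlinarith
  obtain ⟨hpos, hlim⟩ := minkowski_analytic d J r hr0 hr1 D hD hDd hDd' g hg κ W
    (fun ε => (volume (innerNbhd G ε)).toReal) (volume C).toReal (fun ε => ENNReal.toReal_nonneg)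
    hWmono hWK hren (fun ε => ENNReal.toReal_nonneg) hSt₁ hSt₂ hκ hnonlat
  refine ⟨hpos, ?_⟩
  -- the outer part is negligible
  obtain ⟨ρ, hρ, hthick⟩ := volume_cthickening_convex C hCcpt hCconv hdim
  set V := (volume C).toReal with hV
  have hNthick : ∀ ε, 0 < ε → Metric.cthickening ε F = N ε := by
    intro ε hε
    ext x
    rw [Metric.mem_cthickening_iff]
    show _ ↔ Metric.infDist x F ≤ ε
    rw [Metric.infDist, ENNReal.le_ofReal_iff_toReal_le (Metric.infEDist_ne_top hFne) hε.le]
  have hlow : ∀ ε, 0 < ε → W ε ≤ (volume (Metric.cthickening ε F)).toReal := by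
    intro ε hε
    refine ENNReal.toReal_mono hFcpt.isBounded.cthickening.measure_lt_top.ne (measure_mono ?_)
    rw [hNthick ε hε]; exact Set.inter_subset_right
  have hup : ∀ ε, 0 < ε → (volume (Metric.cthickening ε F)).toReal ≤ W ε + ((1 + ε / ρ) ^ d - 1) * V := by
    intro ε hε
    have hCt : volume (Metric.cthickening ε C) ≠ ⊤ := hCbdd.cthickening.measure_lt_top.ne
    have hF2 : volume (Metric.cthickening ε F) ≤ volume (C ∩ N ε) + volume (Metric.cthickening ε C \ C) := by
      refine le_trans (measure_mono ?_) (measure_union_le _ _)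
      intro x hx
      by_cases hxC : x ∈ C
      · exact Or.inl ⟨hxC, by rwa [hNthick ε hε] at hx⟩
      · exact Or.inr ⟨Metric.cthickening_subset_of_subset _ hFC hx, hxC⟩
    have hdf : volume (Metric.cthickening ε C \ C) ≠ ⊤ := measure_ne_top_of_subset Set.diff_subset hCt
    have h3 := ENNReal.toReal_mono (ENNReal.add_ne_top.2 ⟨hWfin ε, hdf⟩) hF2
    rw [ENNReal.toReal_add (hWfin ε) hdf] at h3
    have h4 : (volume (Metric.cthickening ε C \ C)).toReal = (volume (Metric.cthickening ε C)).toReal - V := by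
      rw [measure_diff (Metric.self_subset_cthickening C) hCcl.measurableSet.nullMeasurableSet hCfin,
        ENNReal.toReal_sub_of_le (measure_mono (Metric.self_subset_cthickening C)) hCt]
    have h5 := ENNReal.toReal_mono (ENNReal.mul_ne_top ENNReal.ofReal_ne_top hCfin) (hthick ε hε)
    rw [ENNReal.toReal_mul, ENNReal.toReal_ofReal (by positivity)] at h5
    have h6 : W ε = (volume (C ∩ N ε)).toReal := rfl
    rw [h4, ← h6] at h3
    linarith
  have herr : Tendsto (fun ε : ℝ => ((1 + ε / ρ) ^ d - 1) * V * ε ^ (D - (d : ℝ)))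
      (nhdsWithin 0 (Set.Ioi 0)) (nhds 0) := by
    have hder : HasDerivAt (fun ε : ℝ => (1 + ε / ρ) ^ d) (d * (1 + 0 / ρ) ^ (d - 1) * (1 / ρ)) 0 :=
      (((hasDerivAt_id (0 : ℝ)).div_const ρ).const_add 1).pow d
    have hsl := hder.tendsto_slope_zero_right
    have hpw : Tendsto (fun ε : ℝ => ε ^ (D - (d : ℝ) + 1)) (nhdsWithin 0 (Set.Ioi 0)) (nhds 0) := by
      have hc : ContinuousAt (fun ε : ℝ => ε ^ (D - (d : ℝ) + 1)) 0 :=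
        Real.continuousAt_rpow_const _ _ (Or.inr (by linarith))
      have := hc.tendsto
      rw [Real.zero_rpow (by linarith)] at this
      exact this.mono_left nhdsWithin_le_nhds
    have hprod := (hsl.mul_const V).mul hpw
    rw [mul_zero] at hprod
    refine hprod.congr' ?_
    filter_upwards [self_mem_nhdsWithin] with ε hε
    have hε' : 0 < ε := hε
    rw [Real.rpow_add hε', Real.rpow_one]
    simp only [zero_add, zero_div, add_zero, one_pow, smul_eq_mul]
    field_simp
  have hlim2 := hlim.add herr
  rw [add_zero] at hlim2
  refine tendsto_of_tendsto_of_tendsto_of_le_of_le' hlim hlim2 ?_ ?_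
  · filter_upwards [self_mem_nhdsWithin] with ε hε
    exact mul_le_mul_of_nonneg_right (hlow ε hε) (Real.rpow_nonneg (le_of_lt hε) _)
  · filter_upwards [self_mem_nhdsWithin] with ε hε
    rw [← add_mul]
    exact mul_le_mul_of_nonneg_right (hup ε hε) (Real.rpow_nonneg (le_of_lt hε) _)
end

section
/- Let F = ⋃_{j=1}^J φ_j(F) ⊂ ℝ^d be the self-similar attractor of an IFS Φ = {φ_j}_{j=1}^J (J ≥ 2) of similitudes with scaling ratios 0 < r_j < 1, and let D be the unique real root of ∑_{j=1}^J r_j^D = 1. Assume dim[F] = d, the Tileset Condition, the Nontriviality Condition, the Pearse–Winter Condition (∂C ⊂ F, C = [F]), D > d−1, and that T_0 = C ∖ ⋃_j φ_j(C) has a single connected component G which is diphase Steiner-like with inradius g and coefficients κ_0(G),…,κ_d(G). If Φ is of lattice type (i.e. the additive subgroup ∑_{j=1}^J (log r_j)ℤ of ℝ is discrete), then F is NOT Minkowski measurable, but the average Minkowski content M_av(F) := lim_{T→∞} (1/log T) ∫_{1/T}^1 ε^{D−d} V_F(ε) dε/ε exists and equals (∑_{m=0}^d (g^{D−m}/(D−m))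 κ_m(G)) / (∑_{j=1}^J r_j^D log r_j^{−1}). -/
open MeasureTheory Filter

/-- Linear independence of real powers on an interval. -/
lemma rpow_indep {ι : Type*} (w : ι → ℝ) (hw : Function.Injective w) (a b : ℝ) (ha : 0 < a)
    (hab : a < b) (s : Finset ι) :
    ∀ c : ι → ℝ, (∀ y ∈ Set.Ioo a b, ∑ e ∈ s, c e * y ^ w e = 0) → ∀ e ∈ s, c e = 0 := by
  classical
  induction s using Finset.induction_on with
  | empty => intro c _ e he; simp at he
  | insert e0 s hs ih =>
    intro c hc
    have key : ∀ e ∈ s, c e * (w e - w e0) = 0 := by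
      apply ih (fun e => c e * (w e - w e0))
      intro y hy
      have hy0 : 0 < y := ha.trans hy.1
      have hder : HasDerivAt (fun y : ℝ => ∑ e ∈ insert e0 s, c e * y ^ w e)
          (∑ e ∈ insert e0 s, c e * (w e * y ^ (w e - 1))) y := by
        apply HasDerivAt.fun_sum
        intro e _
        exact (Real.hasDerivAt_rpow_const (Or.inl hy0.ne')).const_mul _
      have hz : HasDerivAt (fun y : ℝ => ∑ e ∈ insert e0 s, c e * y ^ w e) 0 y := by
        refine (hasDerivAt_const y (0:ℝ)).congr_of_eventuallyEq ?_
        filter_upwards [Ioo_mem_nhds hy.1 hy.2] with t ht using hc t ht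
      have h1 := hder.unique hz
      have h2 := hc y hy
      have h3 : ∑ e ∈ insert e0 s, c e * (w e - w e0) * y ^ w e = 0 := by
        have : ∑ e ∈ insert e0 s, c e * (w e - w e0) * y ^ w e
            = y * ∑ e ∈ insert e0 s, c e * (w e * y ^ (w e - 1))
              - w e0 * ∑ e ∈ insert e0 s, c e * y ^ w e := by
          rw [Finset.mul_sum, Finset.mul_sum, ← Finset.sum_sub_distrib]
          apply Finset.sum_congr rfl
          intro e _
          rw [Real.rpow_sub_one hy0.ne']
          field_simp
        rw [this, h1, h2]; ring
      rw [Finset.sum_insert hs] at h3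
      simpa using h3
    have key2 : ∀ e ∈ s, c e = 0 := by
      intro e he
      rcases mul_eq_zero.1 (key e he) with h | h
      · exact h
      · exfalso; apply hs; rwa [← hw (sub_eq_zero.1 h)]
    intro e he
    rcases Finset.mem_insert.1 he with rfl | he
    · have hm : (a + b) / 2 ∈ Set.Ioo a b := ⟨by linarith, by linarith⟩
      have := hc _ hm
      rw [Finset.sum_insert hs, Finset.sum_eq_zero (fun e' he' => by rw [key2 e' he', zero_mul]),
        add_zero] at this
      have hp : 0 < ((a + b) / 2) ^ w e := Real.rpow_pos_of_pos (by linarith) _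
      exact (mul_eq_zero.1 this).resolve_right hp.ne'
    · exact key2 e he

/-- A small renewal estimate. -/
lemma renewal_small {J : ℕ} (hJ : 2 ≤ J) (p r : Fin J → ℝ) (hp : ∀ j, 0 ≤ p j)
    (hp1 : ∑ j, p j = 1) (hr0 : ∀ j, 0 < r j) (hr1 : ∀ j, r j < 1) (K e : ℝ → ℝ)
    (hK : ∀ s, 0 < s → K s = ∑ j, p j * K (s / r j) + e s)
    (hKb : ∀ a b, 0 < a → ∃ A, ∀ s ∈ Set.Icc a b, |K s| ≤ A)
    (he : Tendsto e (nhdsWithin 0 (Set.Ioi 0)) (nhds 0)) :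
    Tendsto (fun T : ℝ => (1 / Real.log T) * K (1 / T)) atTop (nhds 0) := by
  have : Nonempty (Fin J) := ⟨⟨0, by omega⟩⟩
  obtain ⟨jM, hM⟩ := Finite.exists_max r
  obtain ⟨jm, hm⟩ := Finite.exists_min r
  set L := Real.log (1 / r jM) with hL
  have hLpos : 0 < L := Real.log_pos (by rw [lt_div_iff₀ (hr0 _)]; linarith [hr1 jM])
  rw [Metric.tendsto_nhds]
  intro η hη
  have hev := (Metric.tendsto_nhds.1 he) (η / 2 * L) (by positivity)
  obtain ⟨s0, hs0, hs0e⟩ := mem_nhdsGT_iff_exists_Ioo_subset.1 hev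
  have hs0 : 0 < s0 := hs0
  obtain ⟨A, hA⟩ := hKb s0 (s0 / r jm) hs0
  set s1 := s0 / r jm with hs1
  have hs1pos : 0 < s1 := div_pos hs0 (hr0 _)
  have claim : ∀ n : ℕ, ∀ s, s0 * (r jM) ^ n ≤ s → s ≤ s1 →
      |K s| ≤ A + η / 2 * Real.log (s1 / s) := by
    intro n
    induction n with
    | zero =>
      intro s h1 h2
      have h1 : s0 ≤ s := by simpa using h1
      have hs : 0 < s := hs0.trans_le h1
      have : 0 ≤ Real.log (s1 / s) := Real.log_nonneg (by rw [le_div_iff₀ hs]; linarith)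
      have := hA s ⟨h1, h2⟩
      nlinarith
    | succ n ih =>
      intro s h1 h2
      by_cases hss : s0 ≤ s
      · have hs : 0 < s := hs0.trans_le hss
        have : 0 ≤ Real.log (s1 / s) := Real.log_nonneg (by rw [le_div_iff₀ hs]; linarith)
        have := hA s ⟨hss, h2⟩
        nlinarith
      push Not at hss
      have hs : 0 < s := lt_of_lt_of_le (mul_pos hs0 (pow_pos (hr0 _) _)) h1
      have hes : |e s| < η / 2 * L := by
        have := hs0e ⟨hs, hss⟩
        simpa [Real.dist_eq] using this
      have hj : ∀ j, |K (s / r j)| ≤ A + η / 2 * (Real.log (s1 / s) - L) := by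
        intro j
        have h3 : s0 * (r jM) ^ n ≤ s / r j := by
          rw [le_div_iff₀ (hr0 j)]
          refine le_trans ?_ h1
          rw [pow_succ, ← mul_assoc]
          exact mul_le_mul_of_nonneg_left (hM j) (by have := hr0 jM; positivity)
        have h4 : s / r j ≤ s1 := by
          rw [hs1]
          exact div_le_div₀ hs0.le hss.le (hr0 _) (hm j)
        refine (ih _ h3 h4).trans ?_
        have h5 : Real.log (s1 / (s / r j)) ≤ Real.log (s1 / s) - L := by
          rw [hL, ← Real.log_div (by positivity) (by have := hr0 jM; positivity)]
          apply Real.log_le_log (by have := hr0 j; positivity)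
          have := hr0 j; have := hr0 jM
          have e1 : s1 / (s / r j) = s1 / s * r j := by field_simp
          have e2 : s1 / s / (1 / r jM) = s1 / s * r jM := by field_simp
          rw [e1, e2]
          exact mul_le_mul_of_nonneg_left (hM j) (by positivity)
        have := mul_le_mul_of_nonneg_left h5 (show 0 ≤ η / 2 by positivity)
        linarith
      rw [hK s hs]
      calc |∑ j, p j * K (s / r j) + e s| ≤ |∑ j, p j * K (s / r j)| + |e s| := abs_add_le _ _
        _ ≤ ∑ j, p j * (A + η / 2 * (Real.log (s1 / s) - L)) + |e s| := by
            gcongr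
            refine (Finset.abs_sum_le_sum_abs _ _).trans (Finset.sum_le_sum fun j _ => ?_)
            rw [abs_mul, abs_of_nonneg (hp j)]
            exact mul_le_mul_of_nonneg_left (hj j) (hp j)
        _ ≤ _ := by
            rw [← Finset.sum_mul, hp1]
            nlinarith
  have hlog : Tendsto Real.log atTop atTop := Real.tendsto_log_atTop
  filter_upwards [eventually_gt_atTop 1, eventually_ge_atTop (1 / s1),
    hlog.eventually_gt_atTop 0, hlog.eventually_gt_atTop ((A + η / 2 * Real.log s1) / (η / 2))]
    with T hT1 hT2 hT3 hT4
  have hT0 : 0 < T := by linarith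
  have hle : 1 / T ≤ s1 := by
    rw [div_le_iff₀ hT0]; rw [div_le_iff₀ hs1pos] at hT2; linarith
  obtain ⟨n, hn⟩ := exists_pow_lt_of_lt_one (show 0 < 1 / T / s0 by positivity) (hr1 jM)
  have hb := claim n (1 / T) (by rw [lt_div_iff₀ hs0] at hn; linarith) hle
  have e1 : Real.log (s1 / (1 / T)) = Real.log s1 + Real.log T := by
    rw [div_div_eq_mul_div, div_one, Real.log_mul hs1pos.ne' hT0.ne']
  rw [e1] at hb
  rw [div_lt_iff₀ (by positivity)] at hT4
  rw [Real.dist_eq, sub_zero, abs_mul, abs_of_pos (by positivity : 0 < 1 / Real.log T),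
    one_div_mul_eq_div, div_lt_iff₀ hT3]
  nlinarith
/-- renewal functional equation, scaled -/
lemma scaled_fe {d J : ℕ} (r : Fin J → ℝ) (hr0 : ∀ j, 0 < r j) (D : ℝ) (V VG : ℝ → ℝ)
    (hfe : ∀ ε, 0 < ε → V ε = VG ε + ∑ j, r j ^ d * V (ε / r j)) (ε : ℝ) (hε : 0 < ε) :
    ε ^ (D - (d:ℝ)) * V ε = ε ^ (D - (d:ℝ)) * VG ε
      + ∑ j, r j ^ D * ((ε / r j) ^ (D - (d:ℝ)) * V (ε / r j)) := by
  rw [hfe ε hε, mul_add, Finset.mul_sum]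
  congr 1
  apply Finset.sum_congr rfl
  intro j _
  have h := hr0 j
  rw [Real.div_rpow hε.le h.le, Real.rpow_sub h, Real.rpow_natCast]
  have := Real.rpow_pos_of_pos h D
  field_simp

lemma avg_inner {d J : ℕ} (hJ : 2 ≤ J) (r : Fin J → ℝ) (hr0 : ∀ j, 0 < r j)
    (hr1 : ∀ j, r j < 1) (D : ℝ) (hD : ∑ j, r j ^ D = 1) (hDd : (d : ℝ) - 1 < D)
    (hDd' : D < d) (g : ℝ) (hg : 0 < g) (κ : ℕ → ℝ) (V VG : ℝ → ℝ) (A : ℝ)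
    (hV0 : ∀ ε, 0 ≤ V ε) (hVA : ∀ ε, V ε ≤ A) (hVm : Measurable V)
    (hfe : ∀ ε, 0 < ε → V ε = VG ε + ∑ j, r j ^ d * V (ε / r j))
    (hSt₁ : ∀ ε : ℝ, 0 < ε → ε < g →
      VG ε = ∑ m ∈ Finset.range d, κ m * ε ^ ((d : ℝ) - m))
    (hSt₂ : ∀ ε : ℝ, g ≤ ε → VG ε = -κ d) :
    (∀ s, 0 < s → IntegrableOn (fun ε : ℝ => ε ^ (D - (d : ℝ)) * V ε / ε) (Set.Ioi s)) ∧
    Tendsto (fun T : ℝ => (1 / Real.log T) *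
        ∫ ε in Set.Ioi (1 / T), ε ^ (D - (d : ℝ)) * V ε / ε) atTop
      (nhds ((∑ m ∈ Finset.range (d + 1), g ^ (D - (m : ℝ)) / (D - (m : ℝ)) * κ m) /
        (∑ j, r j ^ D * Real.log (r j)⁻¹))) := by
  have hne : Nonempty (Fin J) := ⟨⟨0, by omega⟩⟩
  set F : ℝ → ℝ := fun ε => ε ^ (D - (d : ℝ)) * V ε / ε with hF
  set W : ℝ → ℝ := fun ε => ε ^ (D - (d : ℝ)) * VG ε / ε with hW
  set μ := ∑ j, r j ^ D * Real.log (r j)⁻¹ with hμ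
  set Zt := ∑ m ∈ Finset.range (d + 1), g ^ (D - (m : ℝ)) / (D - (m : ℝ)) * κ m with hZt
  have hFint : ∀ s, 0 < s → IntegrableOn F (Set.Ioi s) := by
    intro s hs
    have h1 : IntegrableOn (fun ε : ℝ => A * ε ^ (D - (d:ℝ) - 1)) (Set.Ioi s) :=
      (integrableOn_Ioi_rpow_of_lt (by linarith) hs).const_mul A
    refine Integrable.mono' h1 ?_ ?_
    · apply Measurable.aestronglyMeasurable
      rw [hF]; fun_prop
    · refine (ae_restrict_iff' measurableSet_Ioi).2 (Eventually.of_forall fun ε hε => ?_)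
      have hε0 : 0 < ε := hs.trans hε
      have hp := Real.rpow_pos_of_pos hε0 (D - (d:ℝ))
      rw [hF]
      simp only
      rw [Real.norm_of_nonneg (div_nonneg (mul_nonneg hp.le (hV0 _)) hε0.le),
        Real.rpow_sub_one hε0.ne', ← mul_div_assoc, mul_comm A]
      gcongr
      exact hVA ε
  refine ⟨hFint, ?_⟩
  have hFfe : ∀ ε, 0 < ε → F ε = W ε + ∑ j, (r j ^ D * (r j)⁻¹) * F ((r j)⁻¹ * ε) := by
    intro ε hε
    have h := scaled_fe r hr0 D V VG hfe ε hε
    simp only [hF, hW]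
    rw [h, add_div, Finset.sum_div]
    congr 1
    apply Finset.sum_congr rfl
    intro j _
    have := hr0 j
    rw [inv_mul_eq_div]
    field_simp
  have hFc : ∀ s, 0 < s → ∀ j,
      IntegrableOn (fun ε => (r j ^ D * (r j)⁻¹) * F ((r j)⁻¹ * ε)) (Set.Ioi s) := by
    intro s hs j
    apply Integrable.const_mul
    have := hr0 j
    exact (integrableOn_Ioi_comp_mul_left_iff F s (inv_pos.2 this)).2 (hFint _ (by positivity))
  have hWint : ∀ s, 0 < s → IntegrableOn W (Set.Ioi s) := by
    intro s hs
    have := (hFint s hs).sub (integrable_finsetSum Finset.univ (fun j _ => hFc s hs j))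
    refine (integrableOn_congr_fun ?_ measurableSet_Ioi).1 this
    intro ε hε
    have := hFfe ε (hs.trans hε)
    simp only [Pi.sub_apply]
    rw [this]; ring
  set H : ℝ → ℝ := fun s => ∫ ε in Set.Ioi s, F ε with hH
  have hHfe : ∀ s, 0 < s → H s = ∑ j, r j ^ D * H (s / r j) + ∫ ε in Set.Ioi s, W ε := by
    intro s hs
    have e1 : H s = ∫ ε in Set.Ioi s, (W ε + ∑ j, (r j ^ D * (r j)⁻¹) * F ((r j)⁻¹ * ε)) :=
      setIntegral_congr_fun measurableSet_Ioi (fun ε hε => hFfe ε (hs.trans hε))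
    rw [e1, integral_add (hWint s hs) (integrable_finsetSum _ (fun j _ => hFc s hs j)),
      integral_finsetSum _ (fun j _ => hFc s hs j), add_comm]
    congr 1
    apply Finset.sum_congr rfl
    intro j _
    have := hr0 j
    rw [integral_const_mul, integral_comp_mul_left_Ioi F s (inv_pos.2 this), inv_inv,
      inv_mul_eq_div, smul_eq_mul]
    simp only [hH]
    field_simp
  have hDm : ∀ m ∈ Finset.range d, 0 < D - (m:ℝ) := by
    intro m hm
    have : (m:ℝ) + 1 ≤ d := by exact_mod_cast Finset.mem_range.1 hm
    linarith
  have hWval : ∀ s, 0 < s → s < g → ∫ ε in Set.Ioi s, W ε =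
      Zt - ∑ m ∈ Finset.range d, s ^ (D - (m:ℝ)) / (D - (m:ℝ)) * κ m := by
    intro s hs hsg
    rw [← Set.Ioc_union_Ioi_eq_Ioi hsg.le, setIntegral_union (Set.Ioc_disjoint_Ioi le_rfl)
      measurableSet_Ioi ((hWint s hs).mono_set Set.Ioc_subset_Ioi_self) (hWint g hg)]
    have i1 : ∫ ε in Set.Ioi g, W ε = g ^ (D - (d:ℝ)) / (D - (d:ℝ)) * κ d := by
      have : ∫ ε in Set.Ioi g, W ε = ∫ ε in Set.Ioi g, ε ^ (D - (d:ℝ) - 1) * (-κ d) := by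
        refine setIntegral_congr_fun measurableSet_Ioi (fun ε hε => ?_)
        have hε0 : 0 < ε := hg.trans hε
        simp only [hW]
        rw [hSt₂ ε (le_of_lt hε), Real.rpow_sub_one hε0.ne']
        ring
      rw [this, integral_mul_const, integral_Ioi_rpow_of_lt (by linarith) hg]
      simp only [sub_add_cancel]
      ring
    have i2 : ∫ ε in Set.Ioc s g, W ε = ∑ m ∈ Finset.range d,
        (g ^ (D - (m:ℝ)) - s ^ (D - (m:ℝ))) / (D - (m:ℝ)) * κ m := by
      have e1 : ∫ ε in Set.Ioc s g, W ε = ∫ ε in Set.Ioc s g,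
          ∑ m ∈ Finset.range d, ε ^ (D - (m:ℝ) - 1) * κ m := by
        rw [integral_Ioc_eq_integral_Ioo, integral_Ioc_eq_integral_Ioo]
        refine setIntegral_congr_fun measurableSet_Ioo (fun ε hε => ?_)
        have hε0 : 0 < ε := hs.trans hε.1
        simp only [hW]
        rw [hSt₁ ε hε0 hε.2, Finset.mul_sum, Finset.sum_div]
        apply Finset.sum_congr rfl
        intro m _
        rw [Real.rpow_sub_one hε0.ne', show D - (m:ℝ) = (D - d) + (d - m) by ring,
          Real.rpow_add hε0]
        ring
      rw [e1, ← intervalIntegral.integral_of_le hsg.le, intervalIntegral.integral_finsetSum]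
      · apply Finset.sum_congr rfl
        intro m hm
        rw [intervalIntegral.integral_mul_const, integral_rpow (Or.inl (by linarith [hDm m hm]))]
        simp only [sub_add_cancel]
      · intro m hm
        exact (intervalIntegral.intervalIntegrable_rpow'
          (by linarith [hDm m hm])).mul_const _
    rw [i1, i2, hZt, Finset.sum_range_succ, add_sub_right_comm, ← Finset.sum_sub_distrib]
    congr 1
    apply Finset.sum_congr rfl
    intro m _
    ring
  have hμpos : 0 < μ := by
    apply Finset.sum_pos _ Finset.univ_nonempty
    intro j _
    exact mul_pos (Real.rpow_pos_of_pos (hr0 j) _)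
      (Real.log_pos ((one_lt_inv₀ (hr0 j)).2 (hr1 j)))
  set c := Zt / μ with hc
  have hmain := renewal_small hJ (fun j => r j ^ D) r
    (fun j => (Real.rpow_pos_of_pos (hr0 j) _).le) hD hr0 hr1
    (fun s => H s + c * Real.log s) (fun s => (∫ ε in Set.Ioi s, W ε) - Zt) ?_ ?_ ?_
  · have : Tendsto (fun T : ℝ => (1 / Real.log T) * (H (1 / T) + c * Real.log (1 / T)) + c)
        atTop (nhds (0 + c)) := hmain.add_const c
    rw [zero_add] at this
    refine this.congr' ?_
    filter_upwards [Real.tendsto_log_atTop.eventually_gt_atTop 0] with T hT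
    rw [one_div T, Real.log_inv]
    field_simp
    ring
  · intro s hs
    rw [hHfe s hs]
    have : ∑ j, r j ^ D * (H (s / r j) + c * Real.log (s / r j)) =
        ∑ j, r j ^ D * H (s / r j) + (∑ j, r j ^ D) * (c * Real.log s) + c * μ := by
      rw [hμ, Finset.mul_sum, Finset.sum_mul, ← Finset.sum_add_distrib, ← Finset.sum_add_distrib]
      apply Finset.sum_congr rfl
      intro j _
      rw [Real.log_div hs.ne' (hr0 j).ne', Real.log_inv]
      ring
    rw [this, hD, hc, div_mul_cancel₀ _ hμpos.ne']
    ring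
  · intro a b ha
    refine ⟨H a + |c| * (|Real.log a| + |Real.log b|), ?_⟩
    intro s hs
    have hs0 : 0 < s := ha.trans_le hs.1
    have hnn : ∀ t, 0 < t → 0 ≤ᵐ[volume.restrict (Set.Ioi t)] F := by
      intro t ht
      refine (ae_restrict_iff' measurableSet_Ioi).2 (Eventually.of_forall fun ε hε => ?_)
      have hε0 : 0 < ε := ht.trans hε
      exact div_nonneg (mul_nonneg (Real.rpow_nonneg hε0.le _) (hV0 _)) hε0.le
    have h0 : 0 ≤ H s := integral_nonneg_of_ae (hnn s hs0)
    have h1 : H s ≤ H a := setIntegral_mono_set (hFint a ha) (hnn a ha)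
      (Set.Ioi_subset_Ioi hs.1).eventuallyLE
    have h2 : |Real.log s| ≤ |Real.log a| + |Real.log b| := by
      have := Real.log_le_log ha hs.1
      have := Real.log_le_log hs0 hs.2
      rw [abs_le]
      constructor
      · linarith [neg_abs_le (Real.log a), abs_nonneg (Real.log b)]
      · linarith [le_abs_self (Real.log b), abs_nonneg (Real.log a)]
    refine (abs_add_le _ _).trans ?_
    rw [abs_of_nonneg h0, abs_mul]
    gcongr
  · have : Tendsto (fun s : ℝ => -∑ m ∈ Finset.range d, s ^ (D - (m:ℝ)) / (D - (m:ℝ)) * κ m)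
        (nhdsWithin 0 (Set.Ioi 0)) (nhds (-∑ m ∈ Finset.range d, 0 / (D - (m:ℝ)) * κ m)) := by
      apply Tendsto.neg
      apply tendsto_finsetSum
      intro m hm
      apply Tendsto.mul_const
      apply Tendsto.div_const
      have := (Real.continuousAt_rpow_const 0 (D - (m:ℝ)) (Or.inr (hDm m hm).le)).tendsto
      rw [Real.zero_rpow (hDm m hm).ne'] at this
      exact this.mono_left nhdsWithin_le_nhds
    simp only [zero_div, zero_mul, Finset.sum_const_zero, neg_zero] at this
    refine this.congr' ?_
    filter_upwards [Ioo_mem_nhdsGT hg] with s hs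
    rw [hWval s hs.1 hs.2]
    ring

set_option maxHeartbeats 1000000 in
lemma nonmeas_inner {d J : ℕ} (hJ : 2 ≤ J) (r : Fin J → ℝ) (hr0 : ∀ j, 0 < r j)
    (D : ℝ) (hD : ∑ j, r j ^ D = 1) (hDd : (d : ℝ) - 1 < D)
    (hDd' : D < d) (g : ℝ) (hg : 0 < g) (κ : ℕ → ℝ) (V VG : ℝ → ℝ) (A : ℝ)
    (hV0 : ∀ ε, 0 ≤ V ε) (hVA : ∀ ε, V ε ≤ A)
    (hfe : ∀ ε, 0 < ε → V ε = VG ε + ∑ j, r j ^ d * V (ε / r j))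
    (hSt₁ : ∀ ε : ℝ, 0 < ε → ε < g →
      VG ε = ∑ m ∈ Finset.range d, κ m * ε ^ ((d : ℝ) - m))
    (hSt₂ : ∀ ε : ℝ, g ≤ ε → VG ε = -κ d)
    (q : ℝ) (hq0 : 0 < q) (hq1 : q < 1) (n : Fin J → ℕ) (hn : ∀ j, 0 < n j)
    (hrq : ∀ j, r j = q ^ n j) (M : ℝ) (hM : 0 < M)
    (hlim : Tendsto (fun ε : ℝ => ε ^ (D - (d : ℝ)) * V ε)
      (nhdsWithin 0 (Set.Ioi 0)) (nhds M)) : False := by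
  have hne : Nonempty (Fin J) := ⟨⟨0, by omega⟩⟩
  set f : ℝ → ℝ := fun ε => ε ^ (D - (d : ℝ)) * V ε with hf
  set z : ℝ → ℝ := fun ε => ε ^ (D - (d : ℝ)) * VG ε with hz
  obtain ⟨Q, hQ⟩ : ∃ Q, Q = q⁻¹ := ⟨_, rfl⟩
  have hQ0 : 0 < Q := by rw [hQ]; positivity
  have hQ1 : 1 < Q := by rw [hQ]; exact (one_lt_inv₀ hq0).2 hq1
  set β := Q ^ (D - (d:ℝ)) with hβ
  have hβ0 : 0 < β := Real.rpow_pos_of_pos hQ0 _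
  have hβ1 : β < 1 := Real.rpow_lt_one_of_one_lt_of_neg hQ1 (by linarith)
  have hpow : ∀ x, 0 < x → ∀ i : ℕ, (x * Q ^ i) ^ (D - (d:ℝ)) = x ^ (D - (d:ℝ)) * β ^ i := by
    intro x hx i
    rw [Real.mul_rpow hx.le (by positivity), hβ, ← Real.rpow_natCast, ← Real.rpow_natCast,
      ← Real.rpow_mul hQ0.le, ← Real.rpow_mul hQ0.le, mul_comm (i:ℝ)]
  have hfs : ∀ x, 0 < x → Summable (fun i : ℕ => f (x * Q ^ i)) := by
    intro x hx
    refine Summable.of_nonneg_of_le (f := fun i : ℕ => x ^ (D - (d:ℝ)) * A * β ^ i) ?_ ?_ ?_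
    · intro i
      exact mul_nonneg (Real.rpow_nonneg (by positivity) _) (hV0 _)
    · intro i
      simp only [hf]
      rw [hpow x hx]
      have := hVA (x * Q ^ i)
      have h2 : 0 ≤ x ^ (D - (d:ℝ)) * β ^ i := by positivity
      nlinarith
    · exact (summable_geometric_of_lt_one hβ0.le hβ1).mul_left _
  have hdiv : ∀ x j (i : ℕ), x * Q ^ i / r j = x * Q ^ n j * Q ^ i := by
    intro x j i
    rw [hrq, hQ, div_eq_mul_inv, inv_pow, inv_pow]; ring
  have hffe : ∀ x, 0 < x → ∀ i : ℕ,
      f (x * Q ^ i) = z (x * Q ^ i) + ∑ j, r j ^ D * f (x * Q ^ n j * Q ^ i) := by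
    intro x hx i
    have h := scaled_fe r hr0 D V VG hfe (x * Q ^ i) (by positivity)
    simp only [hdiv] at h
    exact h
  have hsumj : ∀ x, 0 < x → Summable (fun i : ℕ => ∑ j, r j ^ D * f (x * Q ^ n j * Q ^ i)) := by
    intro x hx
    apply summable_sum
    intro j _
    exact (hfs _ (by positivity)).mul_left _
  have hzs : ∀ x, 0 < x → Summable (fun i : ℕ => z (x * Q ^ i)) := by
    intro x hx
    refine ((hfs x hx).sub (hsumj x hx)).congr ?_
    intro i
    rw [hffe x hx i]; ring
  set Zs : ℝ → ℝ := fun x => ∑' i : ℕ, z (x * Q ^ i) with hZs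
  have hZ1 : ∀ x, 0 < x → Zs x = ∑ j, r j ^ D * ∑ i ∈ Finset.range (n j), f (x * Q ^ i) := by
    intro x hx
    have e1 : ∑' i : ℕ, f (x * Q ^ i) = Zs x + ∑ j, r j ^ D * ∑' i : ℕ, f (x * Q ^ n j * Q ^ i) := by
      rw [tsum_congr (hffe x hx), Summable.tsum_add (hzs x hx) (hsumj x hx),
        Summable.tsum_finsetSum (fun j _ => (hfs _ (by positivity)).mul_left _)]
      simp only [tsum_mul_left, hZs]
    have e2 : ∀ j, ∑' i : ℕ, f (x * Q ^ n j * Q ^ i) =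
        ∑' i : ℕ, f (x * Q ^ i) - ∑ i ∈ Finset.range (n j), f (x * Q ^ i) := by
      intro j
      rw [← (hfs x hx).sum_add_tsum_nat_add (n j), add_sub_cancel_left]
      apply tsum_congr
      intro i
      congr 1
      rw [pow_add]; ring
    simp only [e2, mul_sub, Finset.sum_sub_distrib, ← Finset.sum_mul, hD] at e1
    linarith
  set M' := ∑ j, r j ^ D * ∑ _i ∈ Finset.range (n j), M with hM'
  have hM'pos : 0 < M' := by
    apply Finset.sum_pos _ Finset.univ_nonempty
    intro j _
    apply mul_pos (Real.rpow_pos_of_pos (hr0 j) _)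
    simp only [Finset.sum_const, Finset.card_range, nsmul_eq_mul]
    have : (0:ℝ) < n j := by exact_mod_cast hn j
    positivity
  have hZlim : Tendsto Zs (nhdsWithin 0 (Set.Ioi 0)) (nhds M') := by
    have : Tendsto (fun x => ∑ j, r j ^ D * ∑ i ∈ Finset.range (n j), f (x * Q ^ i))
        (nhdsWithin 0 (Set.Ioi 0)) (nhds M') := by
      apply tendsto_finsetSum
      intro j _
      apply Tendsto.const_mul
      apply tendsto_finsetSum
      intro i _
      refine hlim.comp ?_
      refine tendsto_nhdsWithin_iff.2 ⟨?_, ?_⟩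
      · have : Tendsto (fun x : ℝ => x * Q ^ i) (nhds 0) (nhds (0 * Q ^ i)) :=
          tendsto_id.mul_const _
        rw [zero_mul] at this
        exact this.mono_left nhdsWithin_le_nhds
      · filter_upwards [self_mem_nhdsWithin] with x hx
        have hx : 0 < x := hx
        exact Set.mem_Ioi.2 (by positivity)
    refine this.congr' ?_
    filter_upwards [self_mem_nhdsWithin] with x hx using (hZ1 x hx).symm
  have hZstep : ∀ x, 0 < x → Zs x = z x + Zs (x * Q) := by
    intro x hx
    have := (hzs x hx).tsum_eq_zero_add
    simp only [hZs]
    rw [this, pow_zero, mul_one]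
    congr 1
    apply tsum_congr
    intro i
    rw [pow_succ]; congr 1; ring
  have hZN : ∀ y, 0 < y → ∀ N : ℕ,
      Zs (y * q ^ N) = ∑ i ∈ Finset.range (N + 1), z (y * q ^ i) + Zs (y * Q) := by
    intro y hy N
    induction N with
    | zero => simpa using hZstep y hy
    | succ N ih =>
      rw [Finset.sum_range_succ, hZstep _ (by positivity)]
      have : y * q ^ (N + 1) * Q = y * q ^ N := by
        rw [hQ, pow_succ]; field_simp
      rw [this, ih]; ring
  have hDm : ∀ m ∈ Finset.range d, 0 < D - (m:ℝ) := by
    intro m hm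
    have : (m:ℝ) + 1 ≤ d := by exact_mod_cast Finset.mem_range.1 hm
    linarith
  have hid : ∀ y ∈ Set.Ioo (q * g) g,
      ∑ m ∈ Finset.range d, κ m * (1 - q ^ (D - (m:ℝ)))⁻¹ * y ^ (D - (m:ℝ))
        + (-κ d * β * (1 - β)⁻¹) * y ^ (D - (d:ℝ)) = M' := by
    intro y hy
    have hy0 : 0 < y := lt_trans (by positivity) hy.1
    have t1 : Tendsto (fun N : ℕ => Zs (y * q ^ N)) atTop (nhds M') := by
      refine hZlim.comp (tendsto_nhdsWithin_iff.2 ⟨?_, Eventually.of_forall fun N => ?_⟩)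
      · have := (tendsto_pow_atTop_nhds_zero_of_lt_one hq0.le hq1).const_mul y
        rwa [mul_zero] at this
      · exact Set.mem_Ioi.2 (by positivity)
    have v1 : Zs (y * Q) = (-κ d * β * (1 - β)⁻¹) * y ^ (D - (d:ℝ)) := by
      have : ∀ i : ℕ, z (y * Q * Q ^ i) = (-κ d * y ^ (D - (d:ℝ)) * β) * β ^ i := by
        intro i
        simp only [hz]
        have hge : g ≤ y * Q * Q ^ i := by
          have h1 : g ≤ y * Q := by
            rw [hQ, ← div_eq_mul_inv, le_div_iff₀ hq0]; linarith [hy.1]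
          have h2 : 1 ≤ Q ^ i := one_le_pow₀ hQ1.le
          nlinarith
        rw [hSt₂ _ hge, hpow _ (by positivity), Real.mul_rpow hy0.le hQ0.le]
        ring
      simp only [hZs]
      rw [tsum_congr this, tsum_mul_left, tsum_geometric_of_lt_one hβ0.le hβ1]
      ring
    have v2 : ∀ i : ℕ, z (y * q ^ i) =
        ∑ m ∈ Finset.range d, κ m * y ^ (D - (m:ℝ)) * (q ^ (D - (m:ℝ))) ^ i := by
      intro i
      have hlt : y * q ^ i < g := by
        have h2 : q ^ i ≤ 1 := pow_le_one₀ hq0.le hq1.le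
        nlinarith [hy.2]
      have hpos : 0 < y * q ^ i := by positivity
      simp only [hz]
      rw [hSt₁ _ hpos hlt, Finset.mul_sum]
      apply Finset.sum_congr rfl
      intro m _
      have e3 : (y * q ^ i) ^ (D - (m:ℝ)) = y ^ (D - (m:ℝ)) * (q ^ (D - (m:ℝ))) ^ i := by
        rw [Real.mul_rpow hy0.le (by positivity), ← Real.rpow_natCast, ← Real.rpow_natCast,
          ← Real.rpow_mul hq0.le, ← Real.rpow_mul hq0.le, mul_comm (i:ℝ)]
      rw [mul_assoc, ← e3, show D - (m:ℝ) = (D - d) + (d - m) by ring, Real.rpow_add hpos]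
      ring
    have t2 : Tendsto (fun N : ℕ => Zs (y * q ^ N)) atTop (nhds
        (∑ m ∈ Finset.range d, κ m * y ^ (D - (m:ℝ)) * (1 - q ^ (D - (m:ℝ)))⁻¹ + Zs (y * Q))) := by
      simp only [hZN y hy0]
      apply Tendsto.add_const
      have : ∀ N : ℕ, ∑ i ∈ Finset.range (N + 1), z (y * q ^ i) =
          ∑ m ∈ Finset.range d, κ m * y ^ (D - (m:ℝ)) *
            ∑ i ∈ Finset.range (N + 1), (q ^ (D - (m:ℝ))) ^ i := by
        intro N
        simp only [v2, Finset.mul_sum]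
        rw [Finset.sum_comm]
      simp only [this]
      apply tendsto_finsetSum
      intro m hm
      apply Tendsto.const_mul
      have hs := (hasSum_geometric_of_lt_one (Real.rpow_nonneg hq0.le (D - (m:ℝ)))
        (Real.rpow_lt_one hq0.le hq1 (hDm m hm))).tendsto_sum_nat
      exact (tendsto_add_atTop_iff_nat 1).2 hs
    have := tendsto_nhds_unique t2 t1
    rw [← this, v1]
    congr 1
    apply Finset.sum_congr rfl
    intro m _
    ring
  -- linear independence
  have hnat : ∀ m : ℕ, D - (m:ℝ) ≠ 0 := by
    intro m h
    have h : D = m := by linarith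
    rw [h] at hDd hDd'
    have h1 : m < d := by exact_mod_cast hDd'
    have h2 : d < m + 1 := by
      have : (d:ℝ) < (m:ℝ) + 1 := by linarith
      exact_mod_cast this
    omega
  have hind := rpow_indep (fun o : Option ℕ => o.elim 0 (fun m => D - (m:ℝ))) ?_ (q * g) g
    (by positivity) (by nlinarith) (insert none ((Finset.range (d + 1)).map Function.Embedding.some))
    (fun o => o.elim (-M') (fun m => if m = d then -κ d * β * (1 - β)⁻¹ else
      κ m * (1 - q ^ (D - (m:ℝ)))⁻¹)) ?_ none (by simp)
  · simp only [Option.elim_none] at hind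
    linarith
  · intro a b hab
    rcases a with _ | a <;> rcases b with _ | b <;>
      simp only [Option.elim_none, Option.elim_some] at hab
    · rfl
    · exact absurd hab.symm (hnat b)
    · exact absurd hab (hnat a)
    · have : (a:ℝ) = b := by linarith
      rw [Nat.cast_injective this]
  · intro y hy
    rw [Finset.sum_insert (by simp), Finset.sum_map, Finset.sum_range_succ]
    simp only [Option.elim_none, Function.Embedding.some_apply, Option.elim_some, if_true,
      Real.rpow_zero]
    rw [← hid y hy]
    have : ∀ m ∈ Finset.range d, (if m = d then -κ d * β * (1 - β)⁻¹ else
      κ m * (1 - q ^ (D - (m:ℝ)))⁻¹) * y ^ (D - (m:ℝ)) =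
        κ m * (1 - q ^ (D - (m:ℝ)))⁻¹ * y ^ (D - (m:ℝ)) := by
      intro m hm
      rw [if_neg (Finset.mem_range.1 hm).ne]
    rw [Finset.sum_congr rfl this]
    ring

open scoped Pointwise in
/-- A similitude of Euclidean space is a homeomorphism and scales volume. -/
lemma simil {d : ℕ} (φ : EuclideanSpace ℝ (Fin d) → EuclideanSpace ℝ (Fin d)) (r : ℝ)
    (hr : 0 < r) (hsim : ∀ x y, dist (φ x) (φ y) = r * dist x y) :
    ∃ h : EuclideanSpace ℝ (Fin d) ≃ₜ EuclideanSpace ℝ (Fin d), (⇑h = φ) ∧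
      ∀ s, volume (φ '' s) = ENNReal.ofReal (r ^ d) * volume s := by
  have hiso : Isometry (fun x => r⁻¹ • φ x) := by
    apply Isometry.of_dist_eq
    intro x y
    rw [dist_smul₀, hsim, Real.norm_of_nonneg (by positivity)]
    field_simp
  set A := hiso.affineIsometryOfStrictConvexSpace.toAffineIsometryEquiv rfl with hA
  have hAx : ∀ x, φ x = r • A x := by
    intro x
    have : A x = r⁻¹ • φ x := rfl
    rw [this, smul_inv_smul₀ hr.ne']
  refine ⟨A.toHomeomorph.trans (Homeomorph.smulOfNeZero r hr.ne'), ?_, ?_⟩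
  · ext1 x
    rw [hAx]; rfl
  · intro s
    have e1 : φ '' s = r • ((fun x => A 0 + x) '' (A.linearIsometryEquiv '' s)) := by
      rw [← Set.image_smul, Set.image_image, Set.image_image]
      apply Set.image_congr
      intro x _
      rw [hAx]
      congr 1
      have := A.map_vadd (0 : EuclideanSpace ℝ (Fin d)) x
      simp only [vadd_eq_add, add_zero] at this
      rw [this, add_comm]
    have e2 : volume (A.linearIsometryEquiv.symm ⁻¹' s) = volume s :=
      MeasurePreserving.measure_preimage_equiv
        (f := A.linearIsometryEquiv.symm.toMeasurableEquiv)
        (A.linearIsometryEquiv.symm.measurePreserving) s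
    rw [e1, Measure.addHaar_smul, Set.image_add_left, measure_preimage_add,
      LinearIsometryEquiv.image_eq_preimage_symm, e2, finrank_euclideanSpace,
      Fintype.card_fin, abs_of_nonneg (by positivity)]

lemma cross {d : ℕ} {S : Set (EuclideanSpace ℝ (Fin d))} {x y : EuclideanSpace ℝ (Fin d)}
    (hx : x ∈ S) (hy : y ∉ S) : ∃ w ∈ frontier S, dist x w ≤ dist x y := by
  obtain ⟨w, hw, h⟩ := exists_mem_frontier_infDist_compl_eq_dist hx
    (fun h => hy (h ▸ Set.mem_univ y))
  exact ⟨w, hw, h ▸ Metric.infDist_le_dist_of_mem hy⟩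

lemma pow_lin (a ε : ℝ) (ha : 0 ≤ a) (h0 : 0 ≤ ε) (h1 : ε ≤ 1) (d : ℕ) :
    (1 + ε * a) ^ d ≤ 1 + ε * ((1 + a) ^ d - 1) := by
  induction d with
  | zero => simp
  | succ d ih =>
    have hB : 1 ≤ (1 + a) ^ d := one_le_pow₀ (by linarith)
    rw [pow_succ, pow_succ]
    have hp : 0 ≤ 1 + ε * a := by positivity
    refine (mul_le_mul_of_nonneg_right ih hp).trans ?_
    have h3 : 0 ≤ a * ((1 + a) ^ d - 1) := mul_nonneg ha (by linarith)
    have h4 : ε * ε ≤ ε := by nlinarith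
    nlinarith

/-- The parallel set of a convex body has volume exceeding that of the body by `O(ε)`. -/
lemma outer_bound {d : ℕ} (C : Set (EuclideanSpace ℝ (Fin d))) (hC : Convex ℝ C)
    (hCc : IsCompact C) (hint : (interior C).Nonempty) :
    ∃ c : ℝ, 0 ≤ c ∧ ∀ ε : ℝ, 0 < ε → ε ≤ 1 →
      (volume (Metric.cthickening ε C)).toReal ≤ (volume C).toReal + c * ε := by
  obtain ⟨p, hp⟩ := hint
  obtain ⟨ρ, hρ, hball⟩ := Metric.nhds_basis_closedBall.mem_iff.1 (mem_interior_iff_mem_nhds.1 hp)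
  have hB : 1 ≤ (1 + ρ⁻¹) ^ d := one_le_pow₀ (by have := inv_pos.2 hρ; linarith)
  refine ⟨((1 + ρ⁻¹) ^ d - 1) * (volume C).toReal,
    mul_nonneg (by linarith) ENNReal.toReal_nonneg, ?_⟩
  intro ε hε hε1
  have hsub : Metric.cthickening ε C ⊆ AffineMap.homothety p (1 + ε * ρ⁻¹) '' C := by
    intro x hx
    rw [hCc.cthickening_eq_biUnion_closedBall hε.le] at hx
    simp only [Set.mem_iUnion, Metric.mem_closedBall, exists_prop] at hx
    obtain ⟨y, hy, hxy⟩ := hx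
    set t := ε * ρ⁻¹ with ht
    have ht0 : 0 < t := by positivity
    have hw : p + t⁻¹ • (x - y) ∈ C := by
      apply hball
      rw [Metric.mem_closedBall, dist_eq_norm, add_sub_cancel_left, norm_smul,
        Real.norm_of_nonneg (by positivity), ← dist_eq_norm]
      calc t⁻¹ * dist x y ≤ t⁻¹ * ε := by gcongr
        _ = ρ := by rw [ht]; field_simp
    refine ⟨(1 + t)⁻¹ • y + (t * (1 + t)⁻¹) • (p + t⁻¹ • (x - y)), ?_, ?_⟩
    · exact hC hy hw (by positivity) (by positivity) (by field_simp)
    · rw [AffineMap.homothety_apply, vsub_eq_sub, vadd_eq_add]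
      rw [smul_sub, smul_add, smul_smul, smul_smul, smul_add, smul_smul]
      have h1 : (1 + t) * (1 + t)⁻¹ = 1 := by field_simp
      have h2 : (1 + t) * (t * (1 + t)⁻¹) = t := by field_simp
      have h3 : t * t⁻¹ = 1 := by field_simp
      rw [h1, h2, h3]
      module
  have hfin : volume C ≠ ⊤ := hCc.measure_lt_top.ne
  have hle := measure_mono (μ := volume) hsub
  rw [Measure.addHaar_image_homothety, finrank_euclideanSpace, Fintype.card_fin] at hle
  have hρ' := inv_pos.2 hρ
  have h := ENNReal.toReal_mono (ENNReal.mul_ne_top ENNReal.ofReal_ne_top hfin) hle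
  rw [ENNReal.toReal_mul, ENNReal.toReal_ofReal (abs_nonneg _),
    abs_of_nonneg (by positivity)] at h
  have hl := pow_lin ρ⁻¹ ε hρ'.le hε.le hε1 d
  have := mul_le_mul_of_nonneg_right hl (ENNReal.toReal_nonneg (a := volume C))
  linarith

lemma geo {d J : ℕ} (hd : 1 ≤ d)
    (φ : Fin J → EuclideanSpace ℝ (Fin d) → EuclideanSpace ℝ (Fin d))
    (r : Fin J → ℝ) (hr0 : ∀ j, 0 < r j) (hr1 : ∀ j, r j < 1)
    (hsim : ∀ j x y, dist (φ j x) (φ j y) = r j * dist x y)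
    (F : Set (EuclideanSpace ℝ (Fin d)))
    (hFcpt : IsCompact F)
    (hFinv : F = ⋃ j, φ j '' F)
    (D : ℝ) (hD : ∑ j, r j ^ D = 1)
    (C : Set (EuclideanSpace ℝ (Fin d))) (hC : C = convexHull ℝ F)
    (hdim : (interior C).Nonempty)
    (hTSC₁ : ∀ j, φ j '' interior C ⊆ interior C)
    (hTSC₂ : ∀ j k, j ≠ k → Disjoint (φ j '' interior C) (φ k '' interior C))
    (hPWC : frontier C ⊆ F)
    (G : Set (EuclideanSpace ℝ (Fin d)))
    (hG : G = C \ ⋃ j, φ j '' C)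
    (hGopen : IsOpen G) (hGbdd : Bornology.IsBounded G) (hGne : G.Nonempty) :
    IsCompact C ∧ D < d ∧
    (∀ ε : ℝ, 0 < ε → (volume (Metric.cthickening ε F ∩ C)).toReal =
      (volume (innerNbhd G ε)).toReal +
        ∑ j, r j ^ d * (volume (Metric.cthickening (ε / r j) F ∩ C)).toReal) ∧
    (∃ c : ℝ, 0 ≤ c ∧ ∀ ε : ℝ, 0 < ε → ε ≤ 1 → (volume (Metric.cthickening ε F)).toReal ≤
      (volume (Metric.cthickening ε F ∩ C)).toReal + c * ε) := by
  have hFC : F ⊆ C := hC ▸ subset_convexHull ℝ F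
  have hCcvx : Convex ℝ C := hC ▸ convex_convexHull ℝ F
  have hCcl : IsClosed C := by
    refine isClosed_of_closure_subset ?_
    rw [closure_eq_interior_union_frontier]
    exact Set.union_subset interior_subset (hPWC.trans hFC)
  have hCb : Bornology.IsBounded C := by
    rw [hC]; exact isBounded_convexHull.2 hFcpt.isBounded
  have hCc : IsCompact C := Metric.isCompact_of_isClosed_isBounded hCcl hCb
  have hCfin : volume C ≠ ⊤ := hCc.measure_lt_top.ne
  have hcint : closure (interior C) = C := by
    rw [hCcvx.closure_interior_eq_closure_of_nonempty_interior hdim, hCcl.closure_eq]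
  choose h hh hvol using fun j => simil (φ j) (r j) (hr0 j) (hsim j)
  have hcont : ∀ j, Continuous (φ j) := fun j => hh j ▸ (h j).continuous
  have hinj : ∀ j, Function.Injective (φ j) := fun j => hh j ▸ (h j).injective
  have hcl : ∀ j, ∀ S, φ j '' closure S = closure (φ j '' S) := by
    intro j S; rw [← hh j, Homeomorph.image_closure]
  have hfr : ∀ j, ∀ S, φ j '' frontier S = frontier (φ j '' S) := by
    intro j S; rw [← hh j, Homeomorph.image_frontier]
  have hop : ∀ j, IsOpen (φ j '' interior C) := by
    intro j; rw [← hh j]; exact (h j).isOpenMap _ isOpen_interior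
  have hclm : ∀ j S, IsClosed S → IsClosed (φ j '' S) := by
    intro j S hS; rw [← hh j]; exact (h j).isClosedMap _ hS
  have hφC : ∀ j, φ j '' C ⊆ C := by
    intro j
    calc φ j '' C = closure (φ j '' interior C) := by rw [← hcl, hcint]
      _ ⊆ closure (interior C) := closure_mono (hTSC₁ j)
      _ = C := hcint
  have hdis : ∀ j k, j ≠ k → Disjoint (φ j '' interior C) (φ k '' C) := by
    intro j k hjk
    have := (hTSC₂ j k hjk).closure_right (hop j)
    rwa [← hcl, hcint] at this
  have hφF : ∀ j, φ j '' F ⊆ F := by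
    intro j
    conv_rhs => rw [hFinv]
    exact Set.subset_iUnion (fun j => φ j '' F) j
  -- overlap
  have hbd : ∀ j x, x ∈ φ j '' C → x ∉ φ j '' interior C → x ∈ φ j '' frontier C := by
    rintro j x ⟨c, hc, rfl⟩ hx
    exact ⟨c, ⟨subset_closure hc, fun h => hx ⟨c, h, rfl⟩⟩, rfl⟩
  have hfrC0 : volume (frontier C) = 0 := hCcvx.addHaar_frontier volume
  have hae : ∀ X : Fin J → Set (EuclideanSpace ℝ (Fin d)), (∀ j, X j ⊆ C) →
      (∀ j, IsClosed (X j)) →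
      volume (⋃ j, φ j '' X j) = ∑ j, ENNReal.ofReal (r j ^ d) * volume (X j) := by
    intro X hX hXc
    rw [measure_iUnion₀, tsum_fintype]
    · simp only [hvol]
    · intro j k hjk
      refine measure_mono_null (t := φ j '' frontier C) ?_ (by rw [hvol, hfrC0, mul_zero])
      rintro x ⟨hx1, hx2⟩
      refine hbd j x (Set.image_mono (hX j) hx1) (fun hx => ?_)
      exact Set.disjoint_left.1 (hdis j k hjk) hx (Set.image_mono (hX k) hx2)
    · intro j
      exact (hclm j _ (hXc j)).measurableSet.nullMeasurableSet
  have hGC : G ⊆ C := hG ▸ Set.sdiff_subset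
  have hGdis : ∀ j, Disjoint G (φ j '' C) := by
    intro j
    rw [Set.disjoint_left]
    intro x hx hx2
    rw [hG] at hx
    exact hx.2 (Set.mem_iUnion.2 ⟨j, hx2⟩)
  have hCdec : C = G ∪ ⋃ j, φ j '' C := by
    rw [hG, Set.sdiff_union_of_subset (Set.iUnion_subset hφC)]
  have hcast : ∀ (X : Fin J → Set (EuclideanSpace ℝ (Fin d))), (∀ j, X j ⊆ C) →
      (∑ j, ENNReal.ofReal (r j ^ d) * volume (X j)).toReal
        = ∑ j, r j ^ d * (volume (X j)).toReal := by
    intro X hX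
    rw [ENNReal.toReal_sum]
    · apply Finset.sum_congr rfl
      intro j _
      rw [ENNReal.toReal_mul, ENNReal.toReal_ofReal (pow_nonneg (hr0 j).le _)]
    · intro j _
      exact ENNReal.mul_ne_top ENNReal.ofReal_ne_top (measure_ne_top_of_subset (hX j) hCfin)
  have hunion : ∀ Y, Y ⊆ G → ∀ X : Fin J → Set (EuclideanSpace ℝ (Fin d)), (∀ j, X j ⊆ C) →
      (∀ j, IsClosed (X j)) →
      (volume (Y ∪ ⋃ j, φ j '' X j)).toReal
        = (volume Y).toReal + ∑ j, r j ^ d * (volume (X j)).toReal := by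
    intro Y hY X hX hXc
    rw [measure_union, hae X hX hXc, ENNReal.toReal_add, hcast X hX]
    · exact measure_ne_top_of_subset (hY.trans hGC) hCfin
    · rw [ENNReal.sum_ne_top]
      intro j _
      exact ENNReal.mul_ne_top ENNReal.ofReal_ne_top (measure_ne_top_of_subset (hX j) hCfin)
    · rw [Set.disjoint_iUnion_right]
      exact fun j => (hGdis j).mono hY (Set.image_mono (hX j))
    · exact MeasurableSet.iUnion fun j => (hclm j _ (hXc j)).measurableSet
  -- volume of C
  have hvC : (volume C).toReal = (volume G).toReal + (∑ j, r j ^ d) * (volume C).toReal := by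
    have := hunion G subset_rfl (fun _ => C) (fun _ => subset_rfl) (fun _ => hCcl)
    rw [← hCdec] at this
    rw [Finset.sum_mul]; exact this
  have hGpos : 0 < (volume G).toReal :=
    ENNReal.toReal_pos (hGopen.measure_pos volume hGne).ne' (measure_ne_top_of_subset hGC hCfin)
  have hsum1 : ∑ j, r j ^ d < 1 := by
    by_contra hcon
    push Not at hcon
    have : 0 ≤ (volume C).toReal := ENNReal.toReal_nonneg
    nlinarith
  have hF0 : volume F = 0 := by
    have hFfin : volume F ≠ ⊤ := hFcpt.measure_lt_top.ne
    have h1 : volume F ≤ ∑ j, ENNReal.ofReal (r j ^ d) * volume F := by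
      conv_lhs => rw [hFinv]
      refine (measure_iUnion_le _).trans ?_
      rw [tsum_fintype]
      simp only [hvol]
      exact le_rfl
    have h2 : (volume F).toReal ≤ (∑ j, r j ^ d) * (volume F).toReal := by
      have := ENNReal.toReal_mono (by
        rw [ENNReal.sum_ne_top]
        intro j _
        exact ENNReal.mul_ne_top ENNReal.ofReal_ne_top hFfin) h1
      rw [hcast (fun _ => F) (fun _ => hFC)] at this
      rw [Finset.sum_mul]; exact this
    have h3 : (volume F).toReal = 0 := by
      have : 0 ≤ (volume F).toReal := ENNReal.toReal_nonneg
      nlinarith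
    exact ((ENNReal.toReal_eq_zero_iff _).1 h3).resolve_right hFfin
  have hDlt : D < d := by
    by_contra hcon
    push Not at hcon
    have : ∑ j, r j ^ D ≤ ∑ j, r j ^ d := by
      apply Finset.sum_le_sum
      intro j _
      rw [← Real.rpow_natCast]
      exact Real.rpow_le_rpow_of_exponent_ge (hr0 j) (hr1 j).le hcon
    linarith
  have hmem : ∀ ε : ℝ, 0 ≤ ε → ∀ x, x ∈ Metric.cthickening ε F ↔ ∃ y ∈ F, dist x y ≤ ε := by
    intro ε hε x
    rw [hFcpt.cthickening_eq_biUnion_closedBall hε]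
    simp only [Set.mem_iUnion, Metric.mem_closedBall, exists_prop]
  -- boundary of G
  have hGbdF : ∀ x ∈ closure G, x ∉ G → x ∈ F := by
    intro x hx hxG
    have hxC : x ∈ C := closure_minimal hGC hCcl hx
    rw [hCdec] at hxC
    rcases hxC with hxC | hxC
    · exact absurd hxC hxG
    obtain ⟨j, hj⟩ := Set.mem_iUnion.1 hxC
    have hxi : x ∉ φ j '' interior C := by
      intro hxi
      have := ((hGdis j).mono_right (Set.image_mono interior_subset)).closure_left (hop j)
      exact Set.disjoint_left.1 this hx hxi
    exact hφF j (Set.image_mono hPWC (hbd j x hj hxi))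
  have hFG : ∀ y ∈ F, y ∉ G := by
    intro y hy hyG
    rw [hFinv] at hy
    obtain ⟨j, hj⟩ := Set.mem_iUnion.1 hy
    exact Set.disjoint_left.1 (hGdis j) hyG (Set.image_mono hFC hj)
  have hGuniv : G ≠ Set.univ := by
    intro hu
    have : Nonempty (Fin d) := ⟨⟨0, by omega⟩⟩
    rw [hu] at hGbdd
    exact NormedSpace.unbounded_univ ℝ (EuclideanSpace ℝ (Fin d)) hGbdd
  have hinner : ∀ ε : ℝ, 0 < ε →
      volume (Metric.cthickening ε F ∩ G) = volume (innerNbhd G ε) := by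
    intro ε hε
    apply le_antisymm
    · apply measure_mono
      rintro x ⟨hx, hxG⟩
      obtain ⟨y, hy, hxy⟩ := (hmem ε hε.le x).1 hx
      exact ⟨subset_closure hxG, (Metric.infDist_le_dist_of_mem (hFG y hy)).trans hxy⟩
    · have : innerNbhd G ε ⊆ (Metric.cthickening ε F ∩ G) ∪ F := by
        rintro x ⟨hx, hxe⟩
        by_cases hxG : x ∈ G
        · left
          refine ⟨?_, hxG⟩
          obtain ⟨w, hw, hwd⟩ := exists_mem_frontier_infDist_compl_eq_dist hxG hGuniv
          rw [hGopen.frontier_eq] at hw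
          exact (hmem ε hε.le x).2 ⟨w, hGbdF w hw.1 hw.2, hwd ▸ hxe⟩
        · right; exact hGbdF x hx hxG
      refine (measure_mono this).trans ((measure_union_le _ _).trans ?_)
      rw [hF0, add_zero]
  have hdec : ∀ ε : ℝ, 0 < ε → Metric.cthickening ε F ∩ C = (Metric.cthickening ε F ∩ G) ∪
      ⋃ j, φ j '' (Metric.cthickening (ε / r j) F ∩ C) := by
    intro ε hε
    ext x
    constructor
    · rintro ⟨hx, hxC⟩
      rw [hCdec] at hxC
      rcases hxC with hxC | hxC
      · exact Or.inl ⟨hx, hxC⟩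
      right
      obtain ⟨j, hj⟩ := Set.mem_iUnion.1 hxC
      refine Set.mem_iUnion.2 ⟨j, ?_⟩
      obtain ⟨y, hy, hxy⟩ := (hmem ε hε.le x).1 hx
      have hw : ∃ w ∈ φ j '' F, dist x w ≤ ε := by
        by_cases hyj : y ∈ φ j '' C
        · by_cases hyi : y ∈ φ j '' interior C
          · refine ⟨y, ?_, hxy⟩
            rw [hFinv] at hy
            obtain ⟨k, hk⟩ := Set.mem_iUnion.1 hy
            by_cases hjk : j = k
            · rw [hjk]; exact hk
            · exact absurd (Set.image_mono hFC hk) (Set.disjoint_left.1 (hdis j k hjk) hyi)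
          · exact ⟨y, Set.image_mono hPWC (hbd j y hyj hyi), hxy⟩
        · obtain ⟨w, hw, hwd⟩ := cross hj hyj
          rw [← hfr] at hw
          exact ⟨w, Set.image_mono hPWC hw, hwd.trans hxy⟩
      obtain ⟨w, ⟨v, hv, rfl⟩, hwd⟩ := hw
      obtain ⟨u, hu, rfl⟩ := hj
      refine ⟨u, ⟨(hmem _ (div_pos hε (hr0 j)).le u).2 ⟨v, hv, ?_⟩, hu⟩, rfl⟩
      rw [hsim] at hwd
      rw [le_div_iff₀ (hr0 j)]; linarith
    · rintro (⟨hx, hxG⟩ | hx)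
      · exact ⟨hx, hGC hxG⟩
      · obtain ⟨j, hj⟩ := Set.mem_iUnion.1 hx
        obtain ⟨u, ⟨hu, huC⟩, rfl⟩ := hj
        obtain ⟨v, hv, huv⟩ := (hmem _ (div_pos hε (hr0 j)).le u).1 hu
        refine ⟨(hmem ε hε.le _).2 ⟨φ j v, hφF j ⟨v, hv, rfl⟩, ?_⟩, hφC j ⟨u, huC, rfl⟩⟩
        rw [hsim]
        rw [le_div_iff₀ (hr0 j)] at huv; linarith
  refine ⟨hCc, hDlt, ?_, ?_⟩
  · intro ε hε
    rw [hdec ε hε, hunion _ Set.inter_subset_right _ (fun j => Set.inter_subset_right)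
      (fun j => Metric.isClosed_cthickening.inter hCcl), hinner ε hε]
  · obtain ⟨c, hc0, hc⟩ := outer_bound C hCcvx hCc hdim
    refine ⟨c, hc0, fun ε hε hε1 => ?_⟩
    have hb := hc ε hε hε1
    have hfin : volume (Metric.cthickening ε C) ≠ ⊤ := hCc.cthickening.measure_lt_top.ne
    have hs1 : Metric.cthickening ε F ⊆ Metric.cthickening ε C :=
      Metric.cthickening_subset_of_subset ε hFC
    have hs2 : C ⊆ Metric.cthickening ε C := Metric.self_subset_cthickening C
    have e1 : volume (Metric.cthickening ε F) = volume (Metric.cthickening ε F ∩ C) +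
        volume (Metric.cthickening ε F \ C) := (measure_inter_add_sdiff _ hCcl.measurableSet).symm
    have e2 : volume C + volume (Metric.cthickening ε F \ C) ≤ volume (Metric.cthickening ε C) := by
      rw [← measure_union disjoint_sdiff_self_right
        (Metric.isClosed_cthickening.measurableSet.diff hCcl.measurableSet)]
      exact measure_mono (Set.union_subset hs2 (Set.sdiff_subset.trans hs1))
    have f1 : volume (Metric.cthickening ε F \ C) ≠ ⊤ :=
      measure_ne_top_of_subset (Set.sdiff_subset.trans hs1) hfin
    have f2 : volume (Metric.cthickening ε F ∩ C) ≠ ⊤ :=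
      measure_ne_top_of_subset Set.inter_subset_right hCfin
    have e3 := ENNReal.toReal_mono hfin e2
    rw [ENNReal.toReal_add hCfin f1] at e3
    rw [e1, ENNReal.toReal_add f2 f1]
    linarith

/-- A lattice-type self-similar fractal `F ⊆ ℝᵈ` (satisfying the
tileset, nontriviality and Pearse–Winter conditions, with `D > d - 1` and a single
diphase Steiner-like generator `G`) is NOT Minkowski measurable, but its average
Minkowski content exists and equals
`(∑_{m=0}^d (g^{D-m}/(D-m)) κₘ(G)) / (∑_{j=1}^J rⱼ^D log rⱼ⁻¹)`. -/
theorem stmt_1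
    (d J : ℕ) (hd : 1 ≤ d) (hJ : 2 ≤ J)
    (φ : Fin J → EuclideanSpace ℝ (Fin d) → EuclideanSpace ℝ (Fin d))
    (r : Fin J → ℝ) (hr0 : ∀ j, 0 < r j) (hr1 : ∀ j, r j < 1)
    (hsim : ∀ j x y, dist (φ j x) (φ j y) = r j * dist x y)
    (F : Set (EuclideanSpace ℝ (Fin d)))
    (hFcpt : IsCompact F) (hFne : F.Nonempty)
    (hFinv : F = ⋃ j, φ j '' F)
    (D : ℝ) (hD : ∑ j, r j ^ D = 1)
    (C : Set (EuclideanSpace ℝ (Fin d))) (hC : C = convexHull ℝ F)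
    (hdim : (interior C).Nonempty)
    (hTSC₁ : ∀ j, φ j '' interior C ⊆ interior C)
    (hTSC₂ : ∀ j k, j ≠ k → Disjoint (φ j '' interior C) (φ k '' interior C))
    (hNTC : ¬ interior C ⊆ ⋃ j, φ j '' C)
    (hPWC : frontier C ⊆ F)
    (hDd : (d : ℝ) - 1 < D)
    (G : Set (EuclideanSpace ℝ (Fin d)))
    (hG : G = C \ ⋃ j, φ j '' C)
    (hGopen : IsOpen G) (hGbdd : Bornology.IsBounded G) (hGconn : IsConnected G)
    (g : ℝ) (hg : 0 < g)
    (hginr : IsLUB {ρ : ℝ | ∃ x, Metric.ball x ρ ⊆ G} g)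
    (κ : ℕ → ℝ)
    (hSt₁ : ∀ ε : ℝ, 0 < ε → ε < g →
      (volume (innerNbhd G ε)).toReal = ∑ m ∈ Finset.range d, κ m * ε ^ ((d : ℝ) - m))
    (hSt₂ : ∀ ε : ℝ, g ≤ ε → (volume (innerNbhd G ε)).toReal = -κ d)
    (hGvol : (volume G).toReal = -κ d)
    -- lattice type: the subgroup ∑ⱼ (log rⱼ)ℤ of ℝ is discrete, i.e. cyclic
    (hlat : ∃ a : ℝ, AddSubgroup.closure (Set.range fun j => Real.log (r j)) =
        AddSubgroup.closure {a}) :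
    -- F is not Minkowski measurable
    (¬ ∃ M : ℝ, 0 < M ∧
      Tendsto (fun ε : ℝ => (volume (Metric.cthickening ε F)).toReal * ε ^ (D - (d : ℝ)))
        (nhdsWithin 0 (Set.Ioi 0)) (nhds M)) ∧
    -- but the average Minkowski content exists and equals the stated value
    Tendsto (fun T : ℝ => (1 / Real.log T) *
        ∫ ε in Set.Ioc (1 / T) 1,
          ε ^ (D - (d : ℝ)) * (volume (Metric.cthickening ε F)).toReal / ε)
      atTop
      (nhds ((∑ m ∈ Finset.range (d + 1), g ^ (D - (m : ℝ)) / (D - (m : ℝ)) * κ m) /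
        (∑ j, r j ^ D * Real.log (r j)⁻¹))) := by
  obtain ⟨hCc, hDlt, hfe, c, hc0, hc⟩ := geo hd φ r hr0 hr1 hsim F hFcpt hFinv D hD C hC hdim
    hTSC₁ hTSC₂ hPWC G hG hGopen hGbdd hGconn.nonempty
  have hCfin : volume C ≠ ⊤ := hCc.measure_lt_top.ne
  obtain ⟨V, hV⟩ : ∃ V : ℝ → ℝ, V = fun ε => (volume (Metric.cthickening ε F)).toReal := ⟨_, rfl⟩
  obtain ⟨U, hU⟩ : ∃ U : ℝ → ℝ, U = fun ε => (volume (Metric.cthickening ε F ∩ C)).toReal :=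
    ⟨_, rfl⟩
  have hVe : ∀ ε, (volume (Metric.cthickening ε F)).toReal = V ε := fun ε => by rw [hV]
  have hUe : ∀ ε, (volume (Metric.cthickening ε F ∩ C)).toReal = U ε := fun ε => by rw [hU]
  have hVfin : ∀ ε, volume (Metric.cthickening ε F) ≠ ⊤ :=
    fun ε => hFcpt.cthickening.measure_lt_top.ne
  have hUm : Monotone U := by
    intro a b hab
    rw [hU]
    exact ENNReal.toReal_mono (measure_ne_top_of_subset Set.inter_subset_right hCfin)
      (measure_mono (Set.inter_subset_inter_left _ (Metric.cthickening_mono hab F)))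
  have hVm : Monotone V := by
    intro a b hab
    rw [hV]
    exact ENNReal.toReal_mono (hVfin b) (measure_mono (Metric.cthickening_mono hab F))
  have hU0 : ∀ ε, 0 ≤ U ε := fun ε => by rw [hU]; exact ENNReal.toReal_nonneg
  have hUA : ∀ ε, U ε ≤ (volume C).toReal := fun ε => by
    rw [hU]; exact ENNReal.toReal_mono hCfin (measure_mono Set.inter_subset_right)
  have hUV : ∀ ε, U ε ≤ V ε := fun ε => by
    rw [hU, hV]; exact ENNReal.toReal_mono (hVfin ε) (measure_mono Set.inter_subset_left)
  simp only [hVe, hUe] at hfe hc ⊢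
  have hUms : Measurable U := hUm.measurable
  have hVms : Measurable V := hVm.measurable
  constructor
  · rintro ⟨M, hM, hlim⟩
    obtain ⟨a, ha⟩ := hlat
    have hk : ∀ j, ∃ k : ℤ, k • a = Real.log (r j) := by
      intro j
      apply AddSubgroup.mem_closure_singleton.1
      rw [← ha]
      exact AddSubgroup.subset_closure ⟨j, rfl⟩
    choose k hk using hk
    have hlogneg : ∀ j, Real.log (r j) < 0 := fun j => Real.log_neg (hr0 j) (hr1 j)
    have ha0 : a ≠ 0 := by
      rintro rfl
      have := hlogneg ⟨0, by omega⟩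
      rw [← hk] at this
      simp at this
    have hkl : ∀ j, Real.log (r j) = -(((k j).natAbs : ℝ) * |a|) := by
      intro j
      have h1 : |Real.log (r j)| = ((k j).natAbs : ℝ) * |a| := by
        rw [← hk, zsmul_eq_mul, abs_mul, Nat.cast_natAbs, Int.cast_abs]
      rw [abs_of_neg (hlogneg j)] at h1
      linarith
    refine nonmeas_inner hJ r hr0 D hD hDd hDlt g hg κ U
      (fun ε => (volume (innerNbhd G ε)).toReal) (volume C).toReal hU0 hUA hfe hSt₁ hSt₂
      (Real.exp (-|a|)) (Real.exp_pos _) (by rw [← Real.exp_zero, Real.exp_lt_exp]; simpa using ha0)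
      (fun j => (k j).natAbs) ?_ ?_ M hM ?_
    · intro j
      rw [Nat.pos_iff_ne_zero]
      intro h0
      have := hlogneg j
      rw [hkl, h0] at this
      simp at this
    · intro j
      rw [← Real.exp_nat_mul, ← Real.exp_log (hr0 j), hkl]
      congr 1
      ring
    · have hz : Tendsto (fun ε : ℝ => (V ε - U ε) * ε ^ (D - (d:ℝ)))
          (nhdsWithin 0 (Set.Ioi 0)) (nhds 0) := by
        have hp : 0 < D - d + 1 := by linarith
        have h1 : Tendsto (fun ε : ℝ => c * ε ^ (D - (d:ℝ) + 1))
            (nhdsWithin 0 (Set.Ioi 0)) (nhds 0) := by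
          have := ((Real.continuousAt_rpow_const 0 (D - (d:ℝ) + 1) (Or.inr hp.le)).tendsto).const_mul c
          rw [Real.zero_rpow hp.ne', mul_zero] at this
          exact this.mono_left nhdsWithin_le_nhds
        refine tendsto_of_tendsto_of_tendsto_of_le_of_le' tendsto_const_nhds h1 ?_ ?_
        · filter_upwards [self_mem_nhdsWithin] with ε hε
          exact mul_nonneg (sub_nonneg.2 (hUV ε)) (Real.rpow_nonneg (le_of_lt hε) _)
        · filter_upwards [Ioc_mem_nhdsGT (show (0:ℝ) < 1 by norm_num)] with ε hε
          rw [Real.rpow_add_one hε.1.ne', mul_comm (ε ^ (D - (d:ℝ))), ← mul_assoc]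
          apply mul_le_mul_of_nonneg_right _ (Real.rpow_nonneg hε.1.le _)
          linarith [hc ε hε.1 hε.2]
      have := hlim.sub hz
      rw [sub_zero] at this
      refine this.congr ?_
      intro ε
      ring
  · obtain ⟨hint, hav⟩ := avg_inner hJ r hr0 hr1 D hD hDd hDlt g hg κ U
      (fun ε => (volume (innerNbhd G ε)).toReal) (volume C).toReal hU0 hUA hUms hfe hSt₁ hSt₂
    set H1 := ∫ ε in Set.Ioi (1:ℝ), ε ^ (D - (d : ℝ)) * U ε / ε with hH1
    set R : ℝ → ℝ := fun T => ∫ ε in Set.Ioc (1 / T) 1, ε ^ (D - (d : ℝ)) * (V ε - U ε) / ε with hR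
    have hdom : IntegrableOn (fun ε : ℝ => c * ε ^ (D - (d:ℝ))) (Set.Ioc 0 1) := by
      apply Integrable.const_mul
      exact (intervalIntegrable_iff_integrableOn_Ioc_of_le zero_le_one).1
        (intervalIntegral.intervalIntegrable_rpow' (by linarith))
    have hbd : ∀ ε ∈ Set.Ioc (0:ℝ) 1, ‖ε ^ (D - (d : ℝ)) * (V ε - U ε) / ε‖ ≤
        c * ε ^ (D - (d:ℝ)) := by
      intro ε hε
      have hp := Real.rpow_pos_of_pos hε.1 (D - (d:ℝ))
      rw [Real.norm_of_nonneg (div_nonneg (mul_nonneg hp.le (sub_nonneg.2 (hUV ε))) hε.1.le),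
        div_le_iff₀ hε.1]
      have := mul_le_mul_of_nonneg_left (show V ε - U ε ≤ c * ε by linarith [hc ε hε.1 hε.2]) hp.le
      linarith
    have hRint : IntegrableOn (fun ε : ℝ => ε ^ (D - (d : ℝ)) * (V ε - U ε) / ε) (Set.Ioc 0 1) := by
      refine Integrable.mono' hdom ?_ ?_
      · apply Measurable.aestronglyMeasurable
        fun_prop
      · exact (ae_restrict_iff' measurableSet_Ioc).2 (Eventually.of_forall hbd)
    set B := ∫ ε in Set.Ioc (0:ℝ) 1, c * ε ^ (D - (d:ℝ)) with hB
    have hRb : ∀ T : ℝ, 1 < T → |R T| ≤ B := by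
      intro T hT
      have hT0 : 0 < T := by linarith
      have hsub : Set.Ioc (1 / T) 1 ⊆ Set.Ioc 0 1 := Set.Ioc_subset_Ioc_left (by positivity)
      have h1 : ‖R T‖ ≤ ∫ ε in Set.Ioc (1 / T) 1, c * ε ^ (D - (d:ℝ)) :=
        norm_integral_le_of_norm_le (hdom.mono_set hsub)
          ((ae_restrict_iff' measurableSet_Ioc).2
            (Eventually.of_forall fun ε hε => hbd ε (hsub hε)))
      refine h1.trans (setIntegral_mono_set hdom ?_ hsub.eventuallyLE)
      refine (ae_restrict_iff' measurableSet_Ioc).2 (Eventually.of_forall fun ε hε => ?_)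
      exact mul_nonneg hc0 (Real.rpow_nonneg hε.1.le _)
    have herr : Tendsto (fun T : ℝ => (1 / Real.log T) * (R T - H1)) atTop (nhds 0) := by
      have hi : Tendsto (fun T : ℝ => 1 / Real.log T) atTop (nhds 0) := by
        simp only [one_div]
        exact Real.tendsto_log_atTop.inv_tendsto_atTop
      refine hi.zero_mul_isBoundedUnder_le ?_
      refine isBoundedUnder_of_eventually_le (a := B + |H1|) ?_
      filter_upwards [eventually_gt_atTop 1] with T hT
      simp only [Function.comp, Real.norm_eq_abs]
      exact (abs_sub _ _).trans (by linarith [hRb T hT])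
    have := hav.add herr
    rw [add_zero] at this
    refine this.congr' ?_
    filter_upwards [eventually_gt_atTop 1] with T hT
    have hT0 : 0 < T := by linarith
    have hT1 : 1 / T ≤ 1 := by rw [div_le_one hT0]; exact hT.le
    have hi0 : 0 < 1 / T := by positivity
    rw [← mul_add]
    congr 1
    have hs := setIntegral_union (μ := volume) (Set.Ioc_disjoint_Ioi (le_refl (1:ℝ)))
      measurableSet_Ioi
      ((hint (1 / T) hi0).mono_set (Set.Ioc_subset_Ioi_self : Set.Ioc (1 / T) 1 ⊆ _))
      (hint 1 one_pos)
    rw [Set.Ioc_union_Ioi_eq_Ioi hT1] at hs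
    rw [hs, ← hH1]
    have hadd := integral_add ((hint (1 / T) hi0).mono_set
      (Set.Ioc_subset_Ioi_self : Set.Ioc (1 / T) 1 ⊆ _))
      (hRint.mono_set (Set.Ioc_subset_Ioc_left hi0.le : Set.Ioc (1 / T) 1 ⊆ _))
    have hcg : ∫ ε in Set.Ioc (1 / T) 1, ε ^ (D - (d : ℝ)) * V ε / ε =
        ∫ ε in Set.Ioc (1 / T) 1, (ε ^ (D - (d : ℝ)) * U ε / ε +
          ε ^ (D - (d : ℝ)) * (V ε - U ε) / ε) := by
      congr 1
      ext ε
      ring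
    rw [hcg, hadd]
    simp only [hR]
    ring
end
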